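/- arXiv:1508.07206 — 3 statements merged into one kernel-verified Lean document; each statement's English description precedes it below -/
import Mathlib

section
/- Let ℓ be an odd prime and k a positive integer. For z ∈ ℤ/ℓᵏℤ let v(z) = max{t ∈ {0,…,k} | z ∈ ℓᵗ(ℤ/ℓᵏℤ)} (so v(0) = k). For 0 ≤ i ≤ k and j ∈ {0,2}, let P_{i,j} be the set of monic quadratic polynomials f = X² + bX + c ∈ (ℤ/ℓᵏℤ)[X] with c a unit, with v(Disc f) = i, and such that Disc f is a square in ℤ/ℓᵏℤ if j = 2 and is not a square if j = 0, where Disc f = b² − 4c. Then: #P_{0,0} = (ℓ−1)ℓ^{2k−1}/2; #P_{0,2} = (ℓ−1)(ℓ−2)ℓ^{2k−2}/2; #P_{2t−1,0} = (ℓ−1)² ℓ^{2k−2t−1} for 1 ≤ 2t−1 < k; #P_{2t,0} = #P_{2t,2} = (ℓ−1)² ℓ^{2k−2t−2}/2 for 0 < 2t < k; #P_{k,2} = (ℓ−1)ℓ^{k−1}; and #P_{i,j} = 0 in all remaining cases (namely i odd with j = 2, and i = k with j = 0). -/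
open scoped Classical

/-- Truncated `ℓ`-adic valuation on `ℤ/ℓᵏℤ`: the largest `t ∈ {0,…,k}` with
`z ∈ ℓᵗ(ℤ/ℓᵏℤ)` (so `v 0 = k`). -/
noncomputable def vval (ℓ k : ℕ) (z : ZMod (ℓ ^ k)) : ℕ :=
  Nat.findGreatest (fun t => ∃ y : ZMod (ℓ ^ k), z = (ℓ : ZMod (ℓ ^ k)) ^ t * y) k

/-- `#P_{i,j}`: the number of monic quadratic polynomials `X² + bX + c` over
`ℤ/ℓᵏℤ` with `c` a unit, `v(Disc f) = i`, and discriminant a square (`j = 2`)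
resp. not a square (`j = 0`). -/
noncomputable def Pcount (ℓ k i j : ℕ) : ℕ :=
  Nat.card {p : ZMod (ℓ ^ k) × ZMod (ℓ ^ k) |
    IsUnit p.2 ∧ vval ℓ k (p.1 ^ 2 - 4 * p.2) = i ∧
      (if j = 2 then IsSquare (p.1 ^ 2 - 4 * p.2) else ¬ IsSquare (p.1 ^ 2 - 4 * p.2))}

lemma ell_pow_zero (ℓ k : ℕ) : (ℓ : ZMod (ℓ ^ k)) ^ k = 0 := by
  have := ZMod.natCast_self (ℓ ^ k)
  rwa [Nat.cast_pow] at this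

lemma vval_eq_iff (ℓ k i : ℕ) (hi : i < k) (z : ZMod (ℓ ^ k)) :
    vval ℓ k z = i ↔ (ℓ : ZMod (ℓ ^ k)) ^ i ∣ z ∧ ¬ (ℓ : ZMod (ℓ ^ k)) ^ (i + 1) ∣ z := by
  unfold vval
  rw [Nat.findGreatest_eq_iff]
  constructor
  · rintro ⟨-, h2, h3⟩
    refine ⟨?_, fun h => h3 (Nat.lt_succ_self i) hi h⟩
    by_cases h0 : i = 0
    · simp [h0]
    · exact h2 h0
  · rintro ⟨h1, h2⟩
    refine ⟨hi.le, fun _ => h1, fun n hn _ h => h2 ?_⟩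
    exact (pow_dvd_pow _ hn).trans h

lemma vval_eq_top (ℓ k : ℕ) (hk : 1 ≤ k) (z : ZMod (ℓ ^ k)) :
    vval ℓ k z = k ↔ z = 0 := by
  unfold vval
  rw [Nat.findGreatest_eq_iff]
  constructor
  · rintro ⟨-, h2, -⟩
    obtain ⟨y, hy⟩ := h2 (by omega)
    rw [hy, ell_pow_zero, zero_mul]
  · rintro rfl
    exact ⟨le_rfl, fun _ => ⟨0, by simp⟩, fun n hn h => by omega⟩

lemma isUnit_iff_ndvd (ℓ k : ℕ) (hℓ : ℓ.Prime) (hk : 1 ≤ k) (z : ZMod (ℓ ^ k)) :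
    IsUnit z ↔ ¬ (ℓ : ZMod (ℓ ^ k)) ∣ z := by
  have : NeZero (ℓ ^ k) := ⟨pow_ne_zero _ hℓ.ne_zero⟩
  constructor
  · intro hz hd
    have h1 : IsUnit (ℓ : ZMod (ℓ ^ k)) := isUnit_of_dvd_unit hd hz
    rw [ZMod.isUnit_iff_coprime] at h1
    have := Nat.Coprime.coprime_dvd_right (dvd_pow_self ℓ (by omega : k ≠ 0)) h1
    exact hℓ.one_lt.ne' (by simpa using this)
  · intro h
    obtain ⟨n, rfl⟩ := ZMod.natCast_zmod_surjective z
    rw [ZMod.isUnit_iff_coprime]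
    apply Nat.Coprime.pow_right
    rw [Nat.coprime_comm, hℓ.coprime_iff_not_dvd]
    rintro ⟨m, rfl⟩
    exact h ⟨m, by push_cast; rfl⟩

lemma ncard_mult (ℓ k i : ℕ) (hℓ : ℓ.Prime) (hi : i ≤ k) :
    {z : ZMod (ℓ ^ k) | (ℓ : ZMod (ℓ ^ k)) ^ i ∣ z}.ncard = ℓ ^ (k - i) := by
  have : NeZero (ℓ ^ k) := ⟨pow_ne_zero _ hℓ.ne_zero⟩
  have h : {z : ZMod (ℓ ^ k) | (ℓ : ZMod (ℓ ^ k)) ^ i ∣ z}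
      = (AddSubgroup.zmultiples ((ℓ ^ i : ℕ) : ZMod (ℓ ^ k)) : Set (ZMod (ℓ ^ k))) := by
    ext z
    simp only [Set.mem_ofPred_eq, SetLike.mem_coe, AddSubgroup.mem_zmultiples_iff]
    constructor
    · rintro ⟨y, rfl⟩
      obtain ⟨n, rfl⟩ := ZMod.natCast_zmod_surjective y
      exact ⟨n, by push_cast; simp [mul_comm]⟩
    · rintro ⟨n, rfl⟩
      exact ⟨n, by push_cast; simp [mul_comm]⟩
  rw [h, ← Nat.card_coe_set_eq]
  change Nat.card (AddSubgroup.zmultiples _) = _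
  rw [Nat.card_zmultiples, ZMod.addOrderOf_coe _ (NeZero.ne _),
    Nat.gcd_eq_right (pow_dvd_pow _ hi), Nat.pow_div hi hℓ.pos]

lemma ncard_V (ℓ k i : ℕ) (hℓ : ℓ.Prime) (hi : i < k) :
    {z : ZMod (ℓ ^ k) | vval ℓ k z = i}.ncard = (ℓ - 1) * ℓ ^ (k - i - 1) := by
  have : NeZero (ℓ ^ k) := ⟨pow_ne_zero _ hℓ.ne_zero⟩
  have h : {z : ZMod (ℓ ^ k) | vval ℓ k z = i}
      = {z : ZMod (ℓ ^ k) | (ℓ : ZMod (ℓ ^ k)) ^ i ∣ z}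
        \ {z : ZMod (ℓ ^ k) | (ℓ : ZMod (ℓ ^ k)) ^ (i + 1) ∣ z} := by
    ext z
    simp [vval_eq_iff ℓ k i hi]
  have hsub : {z : ZMod (ℓ ^ k) | (ℓ : ZMod (ℓ ^ k)) ^ (i + 1) ∣ z} ⊆
      {z : ZMod (ℓ ^ k) | (ℓ : ZMod (ℓ ^ k)) ^ i ∣ z} :=
    fun z hz => (pow_dvd_pow _ (Nat.le_succ i)).trans hz
  rw [h, Set.ncard_sdiff hsub (Set.toFinite _),
    ncard_mult ℓ k i hℓ hi.le, ncard_mult ℓ k (i + 1) hℓ hi]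
  obtain ⟨d, hd⟩ : ∃ d, k - i = d + 1 := ⟨k - i - 1, by omega⟩
  rw [hd, show k - (i + 1) = d by omega, Nat.add_sub_cancel, pow_succ, Nat.sub_mul, one_mul,
    mul_comm]

lemma vval_zero_iff (ℓ k : ℕ) (hℓ : ℓ.Prime) (hk : 1 ≤ k) (z : ZMod (ℓ ^ k)) :
    vval ℓ k z = 0 ↔ IsUnit z := by
  rw [vval_eq_iff ℓ k 0 (by omega), isUnit_iff_ndvd ℓ k hℓ hk]
  simp

lemma ncard_units (ℓ k : ℕ) (hℓ : ℓ.Prime) (hk : 1 ≤ k) :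
    {z : ZMod (ℓ ^ k) | IsUnit z}.ncard = (ℓ - 1) * ℓ ^ (k - 1) := by
  have := ncard_V ℓ k 0 hℓ (by omega)
  simpa [vval_zero_iff ℓ k hℓ hk] using this

/-- Hensel's lemma for squares. -/
lemma isSquare_of_sub (ℓ k : ℕ) (hℓ : ℓ.Prime) (hodd : ℓ ≠ 2) (hk : 1 ≤ k)
    (u w : ZMod (ℓ ^ k)) (hu : IsUnit u) (h : (ℓ : ZMod (ℓ ^ k)) ∣ u - w ^ 2) : IsSquare u := by
  have h1 := dvd_sub_pow_of_dvd_sub h (k - 1)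
  rw [show k - 1 + 1 = k by omega, ell_pow_zero, zero_dvd_iff, sub_eq_zero] at h1
  obtain ⟨r, hr⟩ : Odd (ℓ ^ (k - 1)) := (hℓ.odd_of_ne_two hodd).pow
  obtain ⟨v, rfl⟩ := hu
  refine ⟨w ^ (ℓ ^ (k - 1)) * ((v⁻¹ : (ZMod (ℓ ^ k))ˣ) : ZMod (ℓ ^ k)) ^ r, ?_⟩
  have h2 : (v : ZMod (ℓ ^ k)) * ((v⁻¹ : (ZMod (ℓ ^ k))ˣ) : ZMod (ℓ ^ k)) = 1 := by simp
  have h3 : (v : ZMod (ℓ ^ k)) ^ (2 * r) * ((v⁻¹ : (ZMod (ℓ ^ k))ˣ) : ZMod (ℓ ^ k)) ^ (2 * r) = 1 := by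
    rw [← mul_pow, h2, one_pow]
  calc (v : ZMod (ℓ ^ k)) = (v : ZMod (ℓ ^ k)) ^ (ℓ ^ (k - 1)) *
        ((v⁻¹ : (ZMod (ℓ ^ k))ˣ) : ZMod (ℓ ^ k)) ^ (2 * r) := by
          rw [hr, pow_succ]
          linear_combination (-(v : ZMod (ℓ ^ k))) * h3
    _ = _ := by rw [h1]; ring

lemma dvd_of_mul_pow (ℓ k i m : ℕ) (hℓ : ℓ.Prime) (him : i + m ≤ k) (x : ZMod (ℓ ^ k))
    (h : (ℓ : ZMod (ℓ ^ k)) ^ (i + m) ∣ (ℓ : ZMod (ℓ ^ k)) ^ i * x) :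
    (ℓ : ZMod (ℓ ^ k)) ^ m ∣ x := by
  have : NeZero (ℓ ^ k) := ⟨pow_ne_zero _ hℓ.ne_zero⟩
  obtain ⟨n, rfl⟩ := ZMod.natCast_zmod_surjective x
  obtain ⟨y, hy⟩ := h
  obtain ⟨q, rfl⟩ := ZMod.natCast_zmod_surjective y
  have h1 : ((ℓ ^ i * n : ℕ) : ZMod (ℓ ^ k)) = ((ℓ ^ (i + m) * q : ℕ) : ZMod (ℓ ^ k)) := by
    push_cast; exact hy
  rw [ZMod.natCast_eq_natCast_iff] at h1
  have h2 : ℓ ^ (i + m) ∣ ℓ ^ i * n :=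
    ((h1.of_dvd (pow_dvd_pow ℓ him)).dvd_iff dvd_rfl).2 (dvd_mul_right _ _)
  rw [pow_add] at h2
  obtain ⟨s, rfl⟩ := Nat.dvd_of_mul_dvd_mul_left (pow_pos hℓ.pos i) h2
  exact ⟨s, by push_cast; rfl⟩

/-- elements of valuation `i < k` -/
lemma exists_unit (ℓ k i : ℕ) (hℓ : ℓ.Prime) (hi : i < k) (z : ZMod (ℓ ^ k)) :
    vval ℓ k z = i ↔ ∃ u, IsUnit u ∧ z = (ℓ : ZMod (ℓ ^ k)) ^ i * u := by
  rw [vval_eq_iff ℓ k i hi]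
  constructor
  · rintro ⟨⟨u, rfl⟩, h⟩
    refine ⟨u, ?_, rfl⟩
    rw [isUnit_iff_ndvd ℓ k hℓ (by omega)]
    intro hd
    exact h (by rw [pow_succ]; exact mul_dvd_mul_left _ hd)
  · rintro ⟨u, hu, rfl⟩
    refine ⟨dvd_mul_right _ _, fun h => ?_⟩
    rw [isUnit_iff_ndvd ℓ k hℓ (by omega)] at hu
    have := dvd_of_mul_pow ℓ k i 1 hℓ hi u h
    exact hu (by simpa using this)

/-- A nonzero square has even valuation `2 s`, and its unit part is a square mod `ℓ`. -/
lemma square_form (ℓ k i : ℕ) (hℓ : ℓ.Prime) (hi : i < k) (u : ZMod (ℓ ^ k)) (hu : IsUnit u)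
    (hs : IsSquare ((ℓ : ZMod (ℓ ^ k)) ^ i * u)) :
    Even i ∧ ∃ w, (ℓ : ZMod (ℓ ^ k)) ∣ u - w ^ 2 := by
  obtain ⟨x, hx⟩ := hs
  have hv := (exists_unit ℓ k i hℓ hi _).2 ⟨u, hu, rfl⟩
  have hs : vval ℓ k x < k := by
    refine lt_of_le_of_ne (Nat.findGreatest_le _) fun h => ?_
    rw [vval_eq_top ℓ k (by omega)] at h
    rw [h, zero_mul] at hx
    rw [hx, (vval_eq_top ℓ k (by omega) _).2 rfl] at hv
    omega
  obtain ⟨w, hw, hxw⟩ := (exists_unit ℓ k _ hℓ hs x).1 rfl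
  generalize vval ℓ k x = s at hs hxw
  have hxx : (ℓ : ZMod (ℓ ^ k)) ^ i * u = (ℓ : ZMod (ℓ ^ k)) ^ (2 * s) * (w ^ 2) := by
    rw [hx, hxw]; ring
  have h2s : 2 * s < k := by
    by_contra hc
    have h0 : (ℓ : ZMod (ℓ ^ k)) ^ (2 * s) = 0 := by
      rw [show 2 * s = k + (2 * s - k) by omega, pow_add, ell_pow_zero, zero_mul]
    rw [hxx, h0, zero_mul, (vval_eq_top ℓ k (by omega) _).2 rfl] at hv
    omega
  have hv2 := (exists_unit ℓ k (2 * s) hℓ h2s _).2 ⟨w ^ 2, hw.pow 2, rfl⟩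
  rw [← hxx, hv] at hv2
  subst hv2
  refine ⟨even_two_mul s, w, ?_⟩
  have := dvd_of_mul_pow ℓ k (2 * s) 1 hℓ h2s (u - w ^ 2) (by
    rw [mul_sub, hxx, sub_self]; exact dvd_zero _)
  simpa using this

lemma isSquare_iff_even (ℓ k t : ℕ) (hℓ : ℓ.Prime) (hodd : ℓ ≠ 2) (hi : 2 * t < k)
    (u : ZMod (ℓ ^ k)) (hu : IsUnit u) :
    IsSquare ((ℓ : ZMod (ℓ ^ k)) ^ (2 * t) * u) ↔ IsSquare u := by
  constructor
  · intro h
    obtain ⟨-, w, hw⟩ := square_form ℓ k _ hℓ hi u hu h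
    exact isSquare_of_sub ℓ k hℓ hodd (by omega) u w hu hw
  · rintro ⟨w, rfl⟩
    exact ⟨(ℓ : ZMod (ℓ ^ k)) ^ t * w, by ring⟩

lemma isSquare_unit_iff (ℓ k : ℕ) (hℓ : ℓ.Prime) (hodd : ℓ ≠ 2) (hk : 1 ≤ k)
    (u : ZMod (ℓ ^ k)) (hu : IsUnit u) :
    IsSquare u ↔ IsSquare (ZMod.castHom (dvd_pow_self ℓ (by omega : k ≠ 0)) (ZMod ℓ) u) := by
  have : NeZero (ℓ ^ k) := ⟨pow_ne_zero _ hℓ.ne_zero⟩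
  have : NeZero ℓ := ⟨hℓ.ne_zero⟩
  constructor
  · exact fun h => h.map _
  · rintro ⟨w, hw⟩
    obtain ⟨n, rfl⟩ := ZMod.natCast_zmod_surjective w
    obtain ⟨m, rfl⟩ := ZMod.natCast_zmod_surjective u
    refine isSquare_of_sub ℓ k hℓ hodd hk _ (n : ZMod (ℓ ^ k)) hu ?_
    rw [map_natCast, ← sub_eq_zero] at hw
    have h3 : (((m : ℤ) - n * n : ℤ) : ZMod ℓ) = 0 := by push_cast; exact hw
    rw [ZMod.intCast_zmod_eq_zero_iff_dvd] at h3
    obtain ⟨q, hq⟩ := h3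
    refine ⟨(q : ZMod (ℓ ^ k)), ?_⟩
    have := congrArg (Int.cast : ℤ → ZMod (ℓ ^ k)) hq
    push_cast at this
    rw [← this]; ring

lemma exists_nonsq (ℓ k : ℕ) (hℓ : ℓ.Prime) (hodd : ℓ ≠ 2) (hk : 1 ≤ k) :
    ∃ n : ZMod (ℓ ^ k), IsUnit n ∧
      ∀ u, IsUnit u → (IsSquare (n * u) ↔ ¬ IsSquare u) := by
  have : Fact ℓ.Prime := ⟨hℓ⟩
  have : NeZero (ℓ ^ k) := ⟨pow_ne_zero _ hℓ.ne_zero⟩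
  obtain ⟨a, ha⟩ := FiniteField.exists_nonsquare (F := ZMod ℓ) (by rwa [ZMod.ringChar_zmod_n])
  obtain ⟨n, hn⟩ := ZMod.castHom_surjective (dvd_pow_self ℓ (by omega : k ≠ 0)) a
  have hun : IsUnit n := by
    rw [isUnit_iff_ndvd ℓ k hℓ hk]
    rintro ⟨y, rfl⟩
    rw [map_mul, map_natCast, ZMod.natCast_self, zero_mul] at hn
    exact ha (hn ▸ IsSquare.zero)
  refine ⟨n, hun, fun u hu => ?_⟩
  rw [isSquare_unit_iff ℓ k hℓ hodd hk _ (hun.mul hu), isSquare_unit_iff ℓ k hℓ hodd hk u hu,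
    map_mul, hn]
  have hb := (hu.map (ZMod.castHom (dvd_pow_self ℓ (by omega : k ≠ 0)) (ZMod ℓ))).ne_zero
  generalize (ZMod.castHom (dvd_pow_self ℓ (by omega : k ≠ 0)) (ZMod ℓ)) u = b at hb
  have ha0 : a ≠ 0 := by rintro rfl; exact ha IsSquare.zero
  have hab : a * b ≠ 0 := mul_ne_zero ha0 hb
  rw [← quadraticChar_one_iff_isSquare hab, map_mul,
    (quadraticChar_neg_one_iff_not_isSquare).2 ha, ← quadraticChar_neg_one_iff_not_isSquare]
  constructor <;> intro h <;> linarith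

lemma half (ℓ k t : ℕ) (hℓ : ℓ.Prime) (hodd : ℓ ≠ 2) (hi : 2 * t < k) :
    2 * {z : ZMod (ℓ ^ k) | vval ℓ k z = 2 * t ∧ IsSquare z}.ncard
      = (ℓ - 1) * ℓ ^ (k - 2 * t - 1) ∧
    2 * {z : ZMod (ℓ ^ k) | vval ℓ k z = 2 * t ∧ ¬ IsSquare z}.ncard
      = (ℓ - 1) * ℓ ^ (k - 2 * t - 1) := by
  have : NeZero (ℓ ^ k) := ⟨pow_ne_zero _ hℓ.ne_zero⟩
  obtain ⟨n, hn, hns⟩ := exists_nonsq ℓ k hℓ hodd (by omega)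
  have h1 : (fun z => n * z) '' {z : ZMod (ℓ ^ k) | vval ℓ k z = 2 * t ∧ IsSquare z}
      = {z : ZMod (ℓ ^ k) | vval ℓ k z = 2 * t ∧ ¬ IsSquare z} := by
    ext z
    simp only [Set.mem_image, Set.mem_ofPred_eq, exists_unit ℓ k _ hℓ hi]
    constructor
    · rintro ⟨_, ⟨⟨u, hu, rfl⟩, hs⟩, rfl⟩
      rw [isSquare_iff_even ℓ k t hℓ hodd hi u hu] at hs
      have he : n * ((ℓ : ZMod (ℓ ^ k)) ^ (2 * t) * u) = (ℓ : ZMod (ℓ ^ k)) ^ (2 * t) * (n * u) := by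
        ring
      refine ⟨⟨n * u, hn.mul hu, he⟩, ?_⟩
      rw [he, isSquare_iff_even ℓ k t hℓ hodd hi _ (hn.mul hu), hns u hu]
      exact not_not.2 hs
    · rintro ⟨⟨u, hu, rfl⟩, hs⟩
      rw [isSquare_iff_even ℓ k t hℓ hodd hi u hu] at hs
      obtain ⟨m, rfl⟩ := hn
      have hm : IsUnit ((m⁻¹ : (ZMod (ℓ ^ k))ˣ) * u) := (Units.isUnit _).mul hu
      refine ⟨(ℓ : ZMod (ℓ ^ k)) ^ (2 * t) * ((m⁻¹ : (ZMod (ℓ ^ k))ˣ) * u),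
        ⟨⟨_, hm, rfl⟩, ?_⟩, ?_⟩
      · rw [isSquare_iff_even ℓ k t hℓ hodd hi _ hm]
        have := hns _ hm
        rw [Units.mul_inv_cancel_left] at this
        tauto
      · rw [mul_left_comm, Units.mul_inv_cancel_left]
  have h2 := Set.ncard_image_of_injective {z : ZMod (ℓ ^ k) | vval ℓ k z = 2 * t ∧ IsSquare z}
    (fun a b h => hn.mul_left_cancel h : Function.Injective (fun z => n * z))
  rw [h1] at h2
  have h3 := ncard_V ℓ k (2 * t) hℓ hi
  have h4 : {z : ZMod (ℓ ^ k) | vval ℓ k z = 2 * t}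
      = {z : ZMod (ℓ ^ k) | vval ℓ k z = 2 * t ∧ IsSquare z} ∪
        {z : ZMod (ℓ ^ k) | vval ℓ k z = 2 * t ∧ ¬ IsSquare z} := by
    ext z; simp only [Set.mem_union, Set.mem_ofPred_eq]; tauto
  rw [h4, Set.ncard_union_eq (Set.disjoint_left.2 fun z h h' => h'.2 h.2) (Set.toFinite _)
    (Set.toFinite _)] at h3
  omega

lemma odd_nonsq (ℓ k i : ℕ) (hℓ : ℓ.Prime) (hi : i < k) (ho : Odd i) (z : ZMod (ℓ ^ k))
    (hz : vval ℓ k z = i) : ¬ IsSquare z := by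
  intro hs
  obtain ⟨u, hu, rfl⟩ := (exists_unit ℓ k i hℓ hi z).1 hz
  exact Nat.not_even_iff_odd.2 ho (square_form ℓ k i hℓ hi u hu hs).1

lemma ncard_fiber {R : Type*} [Finite R] (Q : R → R → Prop) (P : R → Prop) (n : ℕ)
    (h : ∀ d, P d → {b | Q b d}.ncard = n) :
    Nat.card {p : R × R | Q p.1 p.2 ∧ P p.2} = n * {d | P d}.ncard := by
  letI := Fintype.ofFinite R
  let e : {p : R × R | Q p.1 p.2 ∧ P p.2} ≃ Σ d : {d | P d}, {b | Q b d.1} :=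
    { toFun := fun p => ⟨⟨p.1.2, p.2.2⟩, ⟨p.1.1, p.2.1⟩⟩
      invFun := fun q => ⟨(q.2.1, q.1.1), ⟨q.2.2, q.1.2⟩⟩
      left_inv := fun _ => rfl
      right_inv := fun _ => rfl }
  rw [Nat.card_congr e, Nat.card_sigma]
  rw [Finset.sum_congr rfl (fun d _ => (Nat.card_coe_set_eq _).trans (h d.1 d.2))]
  rw [Finset.sum_const, smul_eq_mul, mul_comm, Finset.card_univ, ← Nat.card_eq_fintype_card,
    Nat.card_coe_set_eq]

lemma unit_nat (ℓ k n : ℕ) (h : Nat.Coprime n ℓ) : IsUnit (n : ZMod (ℓ ^ k)) := by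
  rw [ZMod.isUnit_iff_coprime]
  exact Nat.Coprime.pow_right _ h

lemma Pcount_eq (ℓ k i j : ℕ) (hℓ : ℓ.Prime) (hodd : ℓ ≠ 2) :
    Pcount ℓ k i j = Nat.card {p : ZMod (ℓ ^ k) × ZMod (ℓ ^ k) |
      IsUnit (p.1 ^ 2 - p.2) ∧ (vval ℓ k p.2 = i ∧
        (if j = 2 then IsSquare p.2 else ¬ IsSquare p.2))} := by
  have h2 : Nat.Coprime 2 ℓ := by
    rw [Nat.coprime_primes Nat.prime_two hℓ]; exact hodd.symm
  have h4 : IsUnit (4 : ZMod (ℓ ^ k)) := by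
    have := unit_nat ℓ k 4 (by simpa using Nat.Coprime.pow_left 2 h2)
    simpa using this
  obtain ⟨u, hu⟩ := h4
  have h41 : (4 : ZMod (ℓ ^ k)) * ((u⁻¹ : (ZMod (ℓ ^ k))ˣ) : ZMod (ℓ ^ k)) = 1 := by
    rw [← hu]; simp
  let e : ZMod (ℓ ^ k) × ZMod (ℓ ^ k) ≃ ZMod (ℓ ^ k) × ZMod (ℓ ^ k) :=
    { toFun := fun p => (p.1, p.1 ^ 2 - 4 * p.2)
      invFun := fun p => (p.1, ((u⁻¹ : (ZMod (ℓ ^ k))ˣ) : ZMod (ℓ ^ k)) * (p.1 ^ 2 - p.2))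
      left_inv := fun p => by
        refine Prod.ext rfl ?_
        simp only
        linear_combination p.2 * h41
      right_inv := fun p => by
        refine Prod.ext rfl ?_
        simp only
        linear_combination (-(p.1 ^ 2 - p.2)) * h41 }
  refine Nat.card_congr (e.subtypeEquiv fun p => ?_)
  have hh : IsUnit (p.1 ^ 2 - (p.1 ^ 2 - 4 * p.2)) ↔ IsUnit p.2 := by
    rw [sub_sub_cancel, ← hu, Units.isUnit_units_mul]
  change _ ↔ IsUnit (p.1 ^ 2 - (p.1 ^ 2 - 4 * p.2)) ∧ _
  rw [hh]
  rfl

lemma Pcount_pos (ℓ k i j : ℕ) (hℓ : ℓ.Prime) (hodd : ℓ ≠ 2) (hk : 1 ≤ k) (hi : 1 ≤ i)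
    (hik : i ≤ k) :
    Pcount ℓ k i j = (ℓ - 1) * ℓ ^ (k - 1) * {z : ZMod (ℓ ^ k) | vval ℓ k z = i ∧
        (if j = 2 then IsSquare z else ¬ IsSquare z)}.ncard := by
  have : NeZero (ℓ ^ k) := ⟨pow_ne_zero _ hℓ.ne_zero⟩
  rw [Pcount_eq ℓ k i j hℓ hodd]
  refine ncard_fiber (fun b d : ZMod (ℓ ^ k) => IsUnit (b ^ 2 - d))
    (fun z : ZMod (ℓ ^ k) => vval ℓ k z = i ∧ (if j = 2 then IsSquare z else ¬ IsSquare z)) _ fun d hd => ?_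
  have hdv : (ℓ : ZMod (ℓ ^ k)) ∣ d := by
    rcases hik.lt_or_eq with h | h
    · exact (dvd_pow_self _ (by omega)).trans ((vval_eq_iff ℓ k i h d).1 hd.1).1
    · rw [(vval_eq_top ℓ k hk d).1 (hd.1.trans h)]; exact dvd_zero _
  rw [← ncard_units ℓ k hℓ hk]
  congr 1
  ext b
  simp only [Set.mem_ofPred_eq]
  rw [← isUnit_pow_iff (two_ne_zero) (a := b), isUnit_iff_ndvd ℓ k hℓ hk,
    isUnit_iff_ndvd ℓ k hℓ hk, dvd_sub_left hdv]

lemma Pcount_00 (ℓ k : ℕ) (hℓ : ℓ.Prime) (hodd : ℓ ≠ 2) (hk : 1 ≤ k) :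
    Pcount ℓ k 0 0 = ℓ ^ k * {z : ZMod (ℓ ^ k) | vval ℓ k z = 0 ∧ ¬ IsSquare z}.ncard := by
  have : NeZero (ℓ ^ k) := ⟨pow_ne_zero _ hℓ.ne_zero⟩
  rw [Pcount_eq ℓ k 0 0 hℓ hodd]
  simp only [if_neg (show ¬ (0 : ℕ) = 2 by norm_num)]
  refine ncard_fiber (fun b d : ZMod (ℓ ^ k) => IsUnit (b ^ 2 - d))
    (fun z : ZMod (ℓ ^ k) => vval ℓ k z = 0 ∧ ¬ IsSquare z) _ fun d hd => ?_
  have : {b : ZMod (ℓ ^ k) | IsUnit (b ^ 2 - d)} = Set.univ := by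
    refine Set.eq_univ_of_forall fun b => ?_
    simp only [Set.mem_ofPred_eq]
    rw [isUnit_iff_ndvd ℓ k hℓ hk]
    intro h
    rw [dvd_sub_comm] at h
    exact hd.2 (isSquare_of_sub ℓ k hℓ hodd hk d b ((vval_zero_iff ℓ k hℓ hk d).1 hd.1) h)
  rw [this, Set.ncard_univ, Nat.card_zmod]

lemma ncard_coset (ℓ k : ℕ) (hℓ : ℓ.Prime) (hk : 1 ≤ k) (w : ZMod (ℓ ^ k)) :
    {b : ZMod (ℓ ^ k) | (ℓ : ZMod (ℓ ^ k)) ∣ b - w}.ncard = ℓ ^ (k - 1) := by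
  have h := ncard_mult ℓ k 1 hℓ hk
  rw [← h, ← Set.ncard_image_of_injective _ (sub_left_injective (b := w))]
  congr 1
  ext z
  simp only [Set.mem_image, Set.mem_ofPred_eq, pow_one]
  constructor
  · rintro ⟨b, hb, rfl⟩; exact hb
  · intro hz; exact ⟨z + w, by simpa using hz, by simp⟩

lemma Pcount_02 (ℓ k : ℕ) (hℓ : ℓ.Prime) (hodd : ℓ ≠ 2) (hk : 1 ≤ k) :
    Pcount ℓ k 0 2 = (ℓ - 2) * ℓ ^ (k - 1) *
      {z : ZMod (ℓ ^ k) | vval ℓ k z = 0 ∧ IsSquare z}.ncard := by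
  have : NeZero (ℓ ^ k) := ⟨pow_ne_zero _ hℓ.ne_zero⟩
  rw [Pcount_eq ℓ k 0 2 hℓ hodd]
  simp only [if_true]
  refine ncard_fiber (fun b d : ZMod (ℓ ^ k) => IsUnit (b ^ 2 - d))
    (fun z : ZMod (ℓ ^ k) => vval ℓ k z = 0 ∧ IsSquare z) _ fun d hd => ?_
  obtain ⟨hv, hs⟩ := hd
  rw [vval_zero_iff ℓ k hℓ hk] at hv
  obtain ⟨w, rfl⟩ := hs
  have hw : IsUnit w := isUnit_of_mul_isUnit_left hv
  have h2 : IsUnit (2 : ZMod (ℓ ^ k)) := by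
    have := unit_nat ℓ k 2 (by rw [Nat.coprime_primes Nat.prime_two hℓ]; exact hodd.symm)
    simpa using this
  have h : {b : ZMod (ℓ ^ k) | IsUnit (b ^ 2 - w * w)} =
      ({b : ZMod (ℓ ^ k) | (ℓ : ZMod (ℓ ^ k)) ∣ b - w} ∪
        {b : ZMod (ℓ ^ k) | (ℓ : ZMod (ℓ ^ k)) ∣ b - -w})ᶜ := by
    ext b
    simp only [Set.mem_ofPred_eq, Set.mem_compl_iff, Set.mem_union, not_or]
    rw [← isUnit_iff_ndvd ℓ k hℓ hk, ← isUnit_iff_ndvd ℓ k hℓ hk, ← IsUnit.mul_iff]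
    rw [show (b - w) * (b - -w) = b ^ 2 - w * w by ring]
  have hd : Disjoint {b : ZMod (ℓ ^ k) | (ℓ : ZMod (ℓ ^ k)) ∣ b - w}
        {b : ZMod (ℓ ^ k) | (ℓ : ZMod (ℓ ^ k)) ∣ b - -w} := by
    refine Set.disjoint_left.2 fun b h1 h3 => ?_
    have h4 := dvd_sub h3 h1
    rw [show b - -w - (b - w) = 2 * w by ring] at h4
    exact (isUnit_iff_ndvd ℓ k hℓ hk _).1 (h2.mul hw) h4
  rw [h, Set.ncard_compl, Set.ncard_union_eq hd, ncard_coset ℓ k hℓ hk, ncard_coset ℓ k hℓ hk,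
    Nat.card_zmod]
  obtain ⟨d, rfl⟩ : ∃ d, k = d + 1 := ⟨k - 1, by omega⟩
  rw [Nat.add_sub_cancel, pow_succ, Nat.sub_mul, mul_comm, two_mul]

/-- The cardinalities of the sets `P_{i,j}` for an odd prime `ℓ` and `k ≥ 1`. -/
theorem stmt_11 (ℓ k : ℕ) (hℓ : ℓ.Prime) (hodd : ℓ ≠ 2) (hk : 1 ≤ k) :
    2 * Pcount ℓ k 0 0 = (ℓ - 1) * ℓ ^ (2 * k - 1) ∧
    2 * Pcount ℓ k 0 2 = (ℓ - 1) * (ℓ - 2) * ℓ ^ (2 * k - 2) ∧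
    (∀ t : ℕ, 1 ≤ t → 2 * t - 1 < k →
      Pcount ℓ k (2 * t - 1) 0 = (ℓ - 1) ^ 2 * ℓ ^ (2 * k - 2 * t - 1)) ∧
    (∀ t : ℕ, 0 < 2 * t → 2 * t < k →
      2 * Pcount ℓ k (2 * t) 0 = (ℓ - 1) ^ 2 * ℓ ^ (2 * k - 2 * t - 2) ∧
      2 * Pcount ℓ k (2 * t) 2 = (ℓ - 1) ^ 2 * ℓ ^ (2 * k - 2 * t - 2)) ∧
    Pcount ℓ k k 2 = (ℓ - 1) * ℓ ^ (k - 1) ∧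
    (∀ i : ℕ, Odd i → i < k → Pcount ℓ k i 2 = 0) ∧
    Pcount ℓ k k 0 = 0 := by
  refine ⟨?_, ?_, ?_, ?_, ?_, ?_, ?_⟩
  · have h := (half ℓ k 0 hℓ hodd (by omega)).2
    rw [mul_zero] at h
    rw [Pcount_00 ℓ k hℓ hodd hk, mul_left_comm, h, mul_left_comm, ← pow_add]
    congr 2; omega
  · have h := (half ℓ k 0 hℓ hodd (by omega)).1
    rw [mul_zero] at h
    rw [Pcount_02 ℓ k hℓ hodd hk, mul_left_comm, h,
      show 2 * k - 2 = (k - 1) + (k - 0 - 1) by omega, pow_add]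
    ring
  · intro t ht htk
    have h := ncard_V ℓ k (2 * t - 1) hℓ htk
    have he : {z : ZMod (ℓ ^ k) | vval ℓ k z = 2 * t - 1 ∧
        (if 0 = 2 then IsSquare z else ¬ IsSquare z)} = {z | vval ℓ k z = 2 * t - 1} := by
      ext z
      simp only [Set.mem_ofPred_eq, and_iff_left_iff_imp]
      intro hz
      exact odd_nonsq ℓ k _ hℓ htk ⟨t - 1, by omega⟩ z hz
    rw [Pcount_pos ℓ k _ 0 hℓ hodd hk (by omega) htk.le, he, h,
      show 2 * k - 2 * t - 1 = (k - 1) + (k - (2 * t - 1) - 1) by omega, pow_add]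
    ring
  · intro t ht htk
    obtain ⟨h1, h2⟩ := half ℓ k t hℓ hodd htk
    rw [Pcount_pos ℓ k _ 0 hℓ hodd hk (by omega) htk.le,
      Pcount_pos ℓ k _ 2 hℓ hodd hk (by omega) htk.le, mul_left_comm, mul_left_comm 2]
    have e : (ℓ - 1) ^ 2 * ℓ ^ (2 * k - 2 * t - 2)
        = (ℓ - 1) * ℓ ^ (k - 1) * ((ℓ - 1) * ℓ ^ (k - 2 * t - 1)) := by
      rw [show 2 * k - 2 * t - 2 = (k - 1) + (k - 2 * t - 1) by omega, pow_add]
      ring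
    rw [e, ← h1]
    refine ⟨?_, rfl⟩
    rw [h1, ← h2]
    rfl
  · rw [Pcount_pos ℓ k _ 2 hℓ hodd hk hk le_rfl]
    have he : {z : ZMod (ℓ ^ k) | vval ℓ k z = k ∧
        (if 2 = 2 then IsSquare z else ¬ IsSquare z)} = {0} := by
      ext z
      simp only [Set.mem_ofPred_eq, Set.mem_singleton_iff, vval_eq_top ℓ k hk, if_true]
      exact ⟨fun h => h.1, fun h => ⟨h, h ▸ IsSquare.zero⟩⟩
    rw [he, Set.ncard_singleton, mul_one]
  · intro i hi hik
    rw [Pcount_pos ℓ k _ 2 hℓ hodd hk hi.pos hik.le]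
    have he : {z : ZMod (ℓ ^ k) | vval ℓ k z = i ∧
        (if 2 = 2 then IsSquare z else ¬ IsSquare z)} = ∅ := by
      refine Set.eq_empty_of_forall_notMem fun z hz => ?_
      exact odd_nonsq ℓ k i hℓ hik hi z hz.1 hz.2
    rw [he, Set.ncard_empty, mul_zero]
  · rw [Pcount_pos ℓ k _ 0 hℓ hodd hk hk le_rfl]
    have he : {z : ZMod (ℓ ^ k) | vval ℓ k z = k ∧
        (if 0 = 2 then IsSquare z else ¬ IsSquare z)} = ∅ := by
      refine Set.eq_empty_of_forall_notMem fun z hz => ?_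
      have h0 := (vval_eq_top ℓ k hk z).1 hz.1
      exact hz.2 (h0 ▸ IsSquare.zero)
    rw [he, Set.ncard_empty, mul_zero]
end

section
/- Let ℓ be an odd prime and k a positive integer. For z ∈ ℤ/ℓᵏℤ let v(z) = max{t ∈ {0,…,k} | z ∈ ℓᵗ(ℤ/ℓᵏℤ)}. Let f = X² − TX + S ∈ (ℤ/ℓᵏℤ)[X] be a monic quadratic polynomial with S a unit, set D = T² − 4S, i = v(D), and set j = 2 if D is a square in ℤ/ℓᵏℤ and j = 0 otherwise. Then N(f) := #{σ ∈ GL₂(ℤ/ℓᵏℤ) | the characteristic polynomial of σ is f} is given by: (ℓ−1)ℓ^{2k−1} if i = 0 and j = 0; (ℓ+1)ℓ^{2k−1} if i = 0 and j = 2; (ℓ^{t+1} + ℓᵗ − ℓ − 1)ℓ^{2k−t−1} if i = 2t−1 < k and j = 0; (ℓ^{t+1} + ℓᵗ − 2)ℓ^{2k−t−1} if i = 2t with 0 < i < k and j = 0; (ℓ+1)ℓ^{2k−1} if i = 2t with 0 < i < k and j = 2; (ℓ^{m+1} + ℓᵐ − 1)ℓ^{3m−1} if i = k = 2m (and j = 2);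 (ℓ^{m+1} + ℓᵐ − 1)ℓ^{3m+1} if i = k = 2m+1 (and j = 2); and 0 in the remaining cases. In particular N(f) depends only on the pair (i,j). -/
open Matrix Polynomial
open scoped Classical

/-- `N(f)`: the number of `σ ∈ GL₂(ℤ/ℓᵏℤ)` whose characteristic polynomial is
`f = X² − TX + S`. -/
noncomputable def Ncount (ℓ k : ℕ) (T S : ZMod (ℓ ^ k)) : ℕ :=
  Nat.card {σ : GL (Fin 2) (ZMod (ℓ ^ k)) |
    Matrix.charpoly (σ : Matrix (Fin 2) (Fin 2) (ZMod (ℓ ^ k))) =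
      X ^ 2 - C T * X + C S}


noncomputable def MM (ℓ k : ℕ) (D : ZMod (ℓ ^ k)) : ℕ :=
  Nat.card {p : ZMod (ℓ ^ k) × ZMod (ℓ ^ k) × ZMod (ℓ ^ k) // p.1 ^ 2 + p.2.1 * p.2.2 = D}

lemma two_unit (ℓ k : ℕ) (hℓ : ℓ.Prime) (hodd : ℓ ≠ 2) : ∃ h : ZMod (ℓ ^ k), 2 * h = 1 := by
  have h2 : IsUnit ((2 : ℕ) : ZMod (ℓ ^ k)) := by
    rw [ZMod.isUnit_iff_coprime]
    apply Nat.Coprime.pow_right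
    rw [Nat.coprime_primes Nat.prime_two hℓ]
    exact hodd.symm
  obtain ⟨u, hu⟩ := h2
  refine ⟨(u⁻¹ : (ZMod (ℓ ^ k))ˣ), ?_⟩
  have : (2 : ZMod (ℓ ^ k)) = u := by rw [hu]; norm_num
  rw [this]; simp

lemma ncount_eq (ℓ k : ℕ) (hℓ : ℓ.Prime) (hodd : ℓ ≠ 2) (hk : 1 ≤ k)
    (T S : ZMod (ℓ ^ k)) (hS : IsUnit S) : Ncount ℓ k T S = MM ℓ k (T ^ 2 - 4 * S) := by
  obtain ⟨h, hh⟩ := two_unit ℓ k hℓ hodd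
  have : Fact (1 < ℓ ^ k) := ⟨Nat.one_lt_pow (by omega) hℓ.one_lt⟩
  have key : ∀ A : Matrix (Fin 2) (Fin 2) (ZMod (ℓ ^ k)),
      A.charpoly = X ^ 2 - C T * X + C S ↔ A.trace = T ∧ A.det = S := by
    intro A
    rw [Matrix.charpoly_fin_two]
    constructor
    · intro e
      have e0 := congrArg (fun p => Polynomial.coeff p 0) e
      have e1 := congrArg (fun p => Polynomial.coeff p 1) e
      simp [Polynomial.coeff_X, Polynomial.coeff_C] at e0 e1
      exact ⟨e1, e0⟩
    · rintro ⟨rfl, rfl⟩; rfl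
  unfold Ncount MM
  apply Nat.card_congr
  refine Equiv.ofBijective (fun σ => ⟨((σ.1 : Matrix (Fin 2) (Fin 2) (ZMod (ℓ ^ k))) 0 0 - (σ.1 : Matrix (Fin 2) (Fin 2) (ZMod (ℓ ^ k))) 1 1, 2 * (σ.1 : Matrix (Fin 2) (Fin 2) (ZMod (ℓ ^ k))) 0 1, 2 * (σ.1 : Matrix (Fin 2) (Fin 2) (ZMod (ℓ ^ k))) 1 0), ?_⟩) ⟨?_, ?_⟩
  · obtain ⟨σ, hσ⟩ := σ
    have := (key _).1 hσ
    rw [Matrix.trace_fin_two, Matrix.det_fin_two] at this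
    obtain ⟨rfl, rfl⟩ := this
    ring
  · rintro ⟨σ, hσ⟩ ⟨τ, hτ⟩ e
    have h1 := ((key _).1 hσ).1
    have h2 := ((key _).1 hτ).1
    rw [Matrix.trace_fin_two] at h1 h2
    simp only [Subtype.mk.injEq, Prod.mk.injEq] at e
    obtain ⟨e1, e2, e3⟩ := e
    apply Subtype.ext
    apply Units.ext
    ext i j
    fin_cases i <;> fin_cases j <;> simp only [Fin.zero_eta, Fin.mk_one]
    · linear_combination h * e1 + h * h1 - h * h2 - (σ.1 0 0 - τ.1 0 0) * hh
    · linear_combination h * e2 - (σ.1 0 1 - τ.1 0 1) * hh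
    · linear_combination h * e3 - (σ.1 1 0 - τ.1 1 0) * hh
    · linear_combination -h * e1 + h * h1 - h * h2 - (σ.1 1 1 - τ.1 1 1) * hh
  · rintro ⟨⟨x, b, c⟩, hp⟩
    simp only at hp
    have hd : (!![h * (T + x), h * b; h * c, h * (T - x)]).det = S := by
      rw [Matrix.det_fin_two]; simp
      linear_combination (-h ^ 2) * hp + (2 * h + 1) * S * hh
    have ht : (!![h * (T + x), h * b; h * c, h * (T - x)]).trace = T := by
      rw [Matrix.trace_fin_two]; simp
      linear_combination T * hh
    refine ⟨⟨Matrix.GeneralLinearGroup.mk'' _ (hd ▸ hS), (key _).2 ⟨ht, hd⟩⟩, ?_⟩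
    simp [Matrix.GeneralLinearGroup.mk'']
    refine ⟨?_, ?_, ?_⟩
    · change h * (T + x) - h * (T - x) = x
      linear_combination x * hh
    · change 2 * (h * b) = b
      linear_combination b * hh
    · change 2 * (h * c) = c
      linear_combination c * hh

lemma nonunit_iff (ℓ k : ℕ) (hℓ : ℓ.Prime) (hk : 1 ≤ k) (x : ZMod (ℓ ^ k)) :
    ¬ IsUnit x ↔ (ℓ : ZMod (ℓ ^ k)) ∣ x := by
  have : NeZero (ℓ ^ k) := ⟨pow_ne_zero _ hℓ.ne_zero⟩
  have hx : x = (x.val : ZMod (ℓ ^ k)) := (ZMod.natCast_zmod_val x).symm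
  constructor
  · intro h
    rw [hx, ZMod.isUnit_iff_coprime, Nat.coprime_pow_right_iff (by omega), Nat.coprime_comm,
      Nat.Prime.coprime_iff_not_dvd hℓ, not_not] at h
    rw [hx]
    exact Nat.cast_dvd_cast h
  · intro h hu
    have : IsUnit ((ℓ : ℕ) : ZMod (ℓ ^ k)) := isUnit_of_dvd_unit h hu
    rw [ZMod.isUnit_iff_coprime, Nat.coprime_pow_right_iff (by omega), Nat.coprime_self] at this
    exact hℓ.one_lt.ne' this

lemma dvd_int_iff (ℓ k : ℕ) (hk : 1 ≤ k) (x : ℤ) :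
    (ℓ : ZMod (ℓ ^ k)) ∣ (x : ZMod (ℓ ^ k)) ↔ (ℓ : ℤ) ∣ x := by
  constructor
  · rintro ⟨y, hy⟩
    obtain ⟨y, rfl⟩ := ZMod.intCast_surjective y
    have : ((x - ℓ * y : ℤ) : ZMod (ℓ ^ k)) = 0 := by push_cast; rw [hy]; ring
    rw [ZMod.intCast_zmod_eq_zero_iff_dvd] at this
    have h2 : (ℓ : ℤ) ∣ x - ℓ * y := (dvd_trans (by push_cast; exact dvd_pow_self _ (by omega)) this)
    simpa using dvd_add h2 (Dvd.intro y rfl)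
  · rintro ⟨y, rfl⟩
    push_cast; exact Dvd.intro _ rfl

lemma card_units (ℓ k : ℕ) (hℓ : ℓ.Prime) :
    Nat.card (ZMod (ℓ ^ (k+1)))ˣ = ℓ ^ k * (ℓ - 1) := by
  have : NeZero (ℓ ^ (k+1)) := ⟨pow_ne_zero _ hℓ.ne_zero⟩
  rw [Nat.card_eq_fintype_card, ZMod.card_units_eq_totient, Nat.totient_prime_pow hℓ (by omega)]
  simp

lemma card_nonunits (ℓ k : ℕ) (hℓ : ℓ.Prime) :
    Nat.card {x : ZMod (ℓ ^ (k+1)) // ¬ IsUnit x} = ℓ ^ k := by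
  have : NeZero (ℓ ^ (k+1)) := ⟨pow_ne_zero _ hℓ.ne_zero⟩
  have h1 : Nat.card {x : ZMod (ℓ ^ (k+1)) // IsUnit x} = ℓ ^ k * (ℓ - 1) := by
    rw [← card_units ℓ k hℓ]
    refine Nat.card_congr (Equiv.ofBijective (fun u : (ZMod (ℓ ^ (k+1)))ˣ =>
      (⟨u.1, u.isUnit⟩ : {x : ZMod (ℓ ^ (k+1)) // IsUnit x})) ⟨?_, ?_⟩).symm
    · intro u v e
      exact Units.ext (Subtype.mk.inj e)
    · rintro ⟨x, u, rfl⟩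
      exact ⟨u, rfl⟩
  have h2 := Nat.card_congr (Equiv.sumCompl (fun x : ZMod (ℓ ^ (k+1)) => IsUnit x))
  rw [Nat.card_sum, h1, Nat.card_zmod] at h2
  have h3 : ℓ ^ (k + 1) = ℓ ^ k * (ℓ - 1) + ℓ ^ k := by
    obtain ⟨m, hm⟩ : ∃ m, ℓ = m + 1 := ⟨ℓ - 1, by have := hℓ.one_lt; omega⟩
    rw [hm, pow_succ]; simp; ring
  have h4 := h2.trans h3
  exact Nat.add_left_cancel h4

lemma card_split {α : Type*} [Finite α] (P Q : α → Prop) :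
    Nat.card {x // P x} = Nat.card {x // P x ∧ Q x} + Nat.card {x // P x ∧ ¬ Q x} := by
  rw [← Nat.card_sum]
  refine Nat.card_congr ?_
  classical
  refine (Equiv.sumCompl (fun x : {x // P x} => Q x.1)).symm.trans (Equiv.sumCongr ?_ ?_)
  · exact Equiv.subtypeSubtypeEquivSubtypeInter P Q
  · exact Equiv.subtypeSubtypeEquivSubtypeInter P (fun x => ¬ Q x)

lemma cardA1 (ℓ k : ℕ) (hℓ : ℓ.Prime) (D : ZMod (ℓ ^ (k+1))) :
    Nat.card {p : ZMod (ℓ ^ (k+1)) × ZMod (ℓ ^ (k+1)) × ZMod (ℓ ^ (k+1)) //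
      p.1 ^ 2 + p.2.1 * p.2.2 = D ∧ IsUnit p.2.1} = ℓ ^ (k+1) * (ℓ ^ k * (ℓ - 1)) := by
  rw [← card_units ℓ k hℓ]
  refine Eq.trans ?_ (congrArg (· * _) (Nat.card_zmod (ℓ ^ (k+1))))
  beta_reduce
  rw [← Nat.card_prod]
  refine (Nat.card_congr (Equiv.ofBijective (fun q : ZMod (ℓ ^ (k+1)) × (ZMod (ℓ ^ (k+1)))ˣ =>
      ⟨(q.1, q.2.1, (q.2⁻¹).1 * (D - q.1 ^ 2)), ?_⟩) ⟨?_, ?_⟩)).symm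
  rotate_right
  · simp
  · rintro ⟨x, u⟩ ⟨y, v⟩ e
    simp only [Subtype.mk.injEq, Prod.mk.injEq] at e
    exact Prod.ext e.1 (Units.ext e.2.1)
  · rintro ⟨⟨x, b, c⟩, hp, ⟨u, hu⟩⟩
    simp only at hp hu
    subst hu
    refine ⟨(x, u), ?_⟩
    simp [← hp]

lemma cardA2u (ℓ k : ℕ) (hℓ : ℓ.Prime) (D : ZMod (ℓ ^ (k+1))) (hD : (ℓ : ZMod (ℓ ^ (k+1))) ∣ D) :
    Nat.card {p : ZMod (ℓ ^ (k+1)) × ZMod (ℓ ^ (k+1)) × ZMod (ℓ ^ (k+1)) //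
      (p.1 ^ 2 + p.2.1 * p.2.2 = D ∧ ¬ IsUnit p.2.1) ∧ IsUnit p.2.2} =
      ℓ ^ k * (ℓ ^ k * (ℓ - 1)) := by
  have nu := nonunit_iff ℓ (k+1) hℓ (by omega)
  rw [← card_units ℓ k hℓ]
  refine Eq.trans ?_ (congrArg (· * _) (card_nonunits ℓ k hℓ))
  beta_reduce
  rw [← Nat.card_prod]
  refine (Nat.card_congr (Equiv.ofBijective (fun q : {x : ZMod (ℓ ^ (k+1)) // ¬ IsUnit x} × (ZMod (ℓ ^ (k+1)))ˣ =>
      ⟨(q.1.1, (q.2⁻¹).1 * (D - q.1.1 ^ 2), q.2.1), ?_⟩) ⟨?_, ?_⟩)).symm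
  rotate_right
  · obtain ⟨⟨x, hx⟩, u⟩ := q
    refine ⟨⟨?_, ?_⟩, ?_⟩
    · linear_combination (D - x ^ 2) * u.inv_mul
    · rw [nu] at hx ⊢
      exact Dvd.dvd.mul_left (dvd_sub hD (Dvd.dvd.pow hx (by norm_num))) _
    · simp
  · rintro ⟨⟨x, hx⟩, u⟩ ⟨⟨y, hy⟩, v⟩ e
    simp only [Subtype.mk.injEq, Prod.mk.injEq] at e
    exact Prod.ext (Subtype.ext e.1) (Units.ext e.2.2)
  · rintro ⟨⟨x, b, c⟩, ⟨hp, hb⟩, ⟨u, hu⟩⟩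
    simp only at hp hu hb
    subst hu
    have hx : ¬ IsUnit x := by
      intro hx
      rw [nu] at hb
      have h2 : IsUnit (x ^ 2) := hx.pow 2
      apply (nu _).2 _ h2
      have : x ^ 2 = D - b * u := by rw [← hp]; ring
      rw [this]
      exact dvd_sub hD (Dvd.dvd.mul_right hb _)
    refine ⟨(⟨x, hx⟩, u), ?_⟩
    simp only [Subtype.mk.injEq, Prod.mk.injEq, true_and, and_true]
    linear_combination (- (u⁻¹ : (ZMod (ℓ ^ (k+1)))ˣ).1) * hp + b * u.inv_mul

lemma hensel_sq (ℓ k : ℕ) (hℓ : ℓ.Prime) (hodd : ℓ ≠ 2) (hk : 1 ≤ k) (w E : ZMod (ℓ ^ k))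
    (hE : IsUnit E) (h : (ℓ : ZMod (ℓ ^ k)) ∣ w ^ 2 - E) : ∃ r, IsUnit r ∧ r ^ 2 = E := by
  have nu := nonunit_iff ℓ k hℓ hk
  obtain ⟨i2, hi2⟩ := two_unit ℓ k hℓ hodd
  have hw : IsUnit w := by
    by_contra hw
    rw [nu] at hw
    refine (nu E).2 ?_ hE
    have := dvd_sub (Dvd.dvd.pow hw two_ne_zero) h
    simpa using this
  have hnil : IsNilpotent (aeval w (X ^ 2 - C E : (ZMod (ℓ ^ k))[X])) := by
    obtain ⟨y, hy⟩ := h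
    refine ⟨k, ?_⟩
    have h0 := ZMod.natCast_self (ℓ ^ k)
    rw [Nat.cast_pow] at h0
    simp [hy, mul_pow, h0]
  have hder : IsUnit (aeval w (derivative (X ^ 2 - C E : (ZMod (ℓ ^ k))[X]))) := by
    have e : aeval w (derivative (X ^ 2 - C E : (ZMod (ℓ ^ k))[X])) = 2 * w := by
      simp; ring
    rw [e]
    exact IsUnit.mul (IsUnit.of_mul_eq_one _ hi2) hw
  obtain ⟨r, ⟨-, hr⟩, -⟩ := Polynomial.existsUnique_nilpotent_sub_and_aeval_eq_zero hnil hder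
  have hr' : r ^ 2 = E := by
    simp at hr
    linear_combination hr
  refine ⟨r, ?_, hr'⟩
  rw [← hr'] at hE
  exact (isUnit_pow_iff two_ne_zero).1 hE

lemma roots_two (ℓ k : ℕ) (hℓ : ℓ.Prime) (hodd : ℓ ≠ 2) (hk : 1 ≤ k) (w E : ZMod (ℓ ^ k))
    (hE : IsUnit E) (h : (ℓ : ZMod (ℓ ^ k)) ∣ w ^ 2 - E) :
    Nat.card {x : ZMod (ℓ ^ k) // x ^ 2 = E} = 2 := by
  have nu := nonunit_iff ℓ k hℓ hk
  have : Fact (1 < ℓ ^ k) := ⟨Nat.one_lt_pow (by omega) hℓ.one_lt⟩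
  obtain ⟨i2, hi2⟩ := two_unit ℓ k hℓ hodd
  obtain ⟨r, hru, rfl⟩ := hensel_sq ℓ k hℓ hodd hk w E hE h
  have h2r : IsUnit (2 * r) := IsUnit.mul (IsUnit.of_mul_eq_one _ hi2) hru
  have hset : {x : ZMod (ℓ ^ k) | x ^ 2 = r ^ 2} = {r, -r} := by
    ext x
    simp only [Set.mem_ofPred_eq, Set.mem_insert_iff, Set.mem_singleton_iff]
    constructor
    · intro hx
      have hm : (x - r) * (x + r) = 0 := by linear_combination hx
      by_cases h1 : IsUnit (x - r)
      · right
        have := (h1.mul_right_eq_zero).1 hm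
        linear_combination this
      · by_cases h3 : IsUnit (x + r)
        · left
          have := (h3.mul_left_eq_zero).1 hm
          linear_combination this
        · exfalso
          rw [nu] at h1 h3
          refine (nu _).2 ?_ h2r
          have := dvd_sub h3 h1
          ring_nf at this ⊢
          exact this
    · rintro (rfl | rfl) <;> ring
  have hne : r ≠ -r := by
    intro e
    have : 2 * r = 0 := by linear_combination e
    rw [this] at h2r
    exact not_isUnit_zero h2r
  have := Set.ncard_pair hne
  rw [← hset] at this
  exact this

lemma MM_split (ℓ k : ℕ) (hℓ : ℓ.Prime) (D : ZMod (ℓ ^ (k+1))) : MM ℓ (k+1) D =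
    ℓ ^ (k+1) * (ℓ ^ k * (ℓ - 1)) +
    Nat.card {p : ZMod (ℓ ^ (k+1)) × ZMod (ℓ ^ (k+1)) × ZMod (ℓ ^ (k+1)) //
      p.1 ^ 2 + p.2.1 * p.2.2 = D ∧ ¬ IsUnit p.2.1} := by
  have : NeZero (ℓ ^ (k+1)) := ⟨pow_ne_zero _ hℓ.ne_zero⟩
  unfold MM
  rw [card_split _ (fun p => IsUnit p.2.1), cardA1 ℓ k hℓ]

lemma MM_unit_nonsq (ℓ k : ℕ) (hℓ : ℓ.Prime) (hodd : ℓ ≠ 2) (D : ZMod (ℓ ^ (k+1)))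
    (hD : IsUnit D) (hs : ¬ IsSquare D) : MM ℓ (k+1) D = ℓ ^ (2 * k + 1) * (ℓ - 1) := by
  rw [MM_split ℓ k hℓ]
  have nu := nonunit_iff ℓ (k+1) hℓ (by omega)
  have : IsEmpty {p : ZMod (ℓ ^ (k+1)) × ZMod (ℓ ^ (k+1)) × ZMod (ℓ ^ (k+1)) //
      p.1 ^ 2 + p.2.1 * p.2.2 = D ∧ ¬ IsUnit p.2.1} := by
    constructor
    rintro ⟨⟨x, b, c⟩, hp, hb⟩
    simp only at hp hb
    rw [nu] at hb
    obtain ⟨r, -, hr⟩ := hensel_sq ℓ (k+1) hℓ hodd (by omega) x D hD (by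
      have : x ^ 2 - D = - (b * c) := by rw [← hp]; ring
      rw [this, dvd_neg]
      exact Dvd.dvd.mul_right hb _)
    exact hs ⟨r, by rw [← hr]; ring⟩
  rw [Nat.card_of_isEmpty]
  ring

lemma MM_unit_sq (ℓ k : ℕ) (hℓ : ℓ.Prime) (hodd : ℓ ≠ 2) (D : ZMod (ℓ ^ (k+1)))
    (hD : IsUnit D) (hs : IsSquare D) : MM ℓ (k+1) D = ℓ ^ (2 * k + 1) * (ℓ + 1) := by
  rw [MM_split ℓ k hℓ]
  have nu := nonunit_iff ℓ (k+1) hℓ (by omega)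
  have : NeZero (ℓ ^ (k+1)) := ⟨pow_ne_zero _ hℓ.ne_zero⟩
  obtain ⟨w, hw⟩ := hs
  let e : {p : ZMod (ℓ ^ (k+1)) × ZMod (ℓ ^ (k+1)) × ZMod (ℓ ^ (k+1)) //
      p.1 ^ 2 + p.2.1 * p.2.2 = D ∧ ¬ IsUnit p.2.1} ≃
      Σ q : {b : ZMod (ℓ ^ (k+1)) // ¬ IsUnit b} × ZMod (ℓ ^ (k+1)),
        {x : ZMod (ℓ ^ (k+1)) // x ^ 2 = D - q.1.1 * q.2} :=
    { toFun := fun p => ⟨(⟨p.1.2.1, p.2.2⟩, p.1.2.2), ⟨p.1.1, by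
        have := p.2.1
        linear_combination this⟩⟩
      invFun := fun q => ⟨(q.2.1, q.1.1.1, q.1.2), by
        have := q.2.2
        refine ⟨?_, q.1.1.2⟩
        simp only
        linear_combination this⟩
      left_inv := fun p => rfl
      right_inv := fun q => rfl }
  have hc : ∀ q : {b : ZMod (ℓ ^ (k+1)) // ¬ IsUnit b} × ZMod (ℓ ^ (k+1)),
      Nat.card {x : ZMod (ℓ ^ (k+1)) // x ^ 2 = D - q.1.1 * q.2} = 2 := by
    rintro ⟨⟨b, hb⟩, c⟩
    rw [nu] at hb
    have hbc : (ℓ : ZMod (ℓ ^ (k+1))) ∣ b * c := Dvd.dvd.mul_right hb _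
    apply roots_two ℓ (k+1) hℓ hodd (by omega) w
    · by_contra hn
      rw [nu] at hn
      refine (nu D).2 ?_ hD
      simpa using dvd_add hn hbc
    · have : w ^ 2 - (D - b * c) = b * c := by rw [hw]; ring
      simp only
      rw [this]; exact hbc
  rw [Nat.card_congr e, Nat.card_sigma]
  simp only [hc]
  rw [Finset.sum_const, Finset.card_univ, ← Nat.card_eq_fintype_card, Nat.card_prod,
    card_nonunits ℓ k hℓ, Nat.card_zmod]
  obtain ⟨m, hm⟩ : ∃ m, ℓ = m + 1 := ⟨ℓ - 1, by have := hℓ.one_lt; omega⟩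
  rw [hm, smul_eq_mul, Nat.add_sub_cancel]
  ring

lemma MM_nonunit (ℓ k : ℕ) (hℓ : ℓ.Prime) (D : ZMod (ℓ ^ (k+1)))
    (hD : (ℓ : ZMod (ℓ ^ (k+1))) ∣ D) : MM ℓ (k+1) D + ℓ ^ (2 * k) =
    ℓ ^ (2 * k + 2) + Nat.card {p : ZMod (ℓ ^ (k+1)) × ZMod (ℓ ^ (k+1)) × ZMod (ℓ ^ (k+1)) //
      p.1 ^ 2 + p.2.1 * p.2.2 = D ∧ (ℓ : ZMod (ℓ ^ (k+1))) ∣ p.1 ∧ (ℓ : ZMod (ℓ ^ (k+1))) ∣ p.2.1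
        ∧ (ℓ : ZMod (ℓ ^ (k+1))) ∣ p.2.2} := by
  have nu := nonunit_iff ℓ (k+1) hℓ (by omega)
  have : NeZero (ℓ ^ (k+1)) := ⟨pow_ne_zero _ hℓ.ne_zero⟩
  rw [MM_split ℓ k hℓ, card_split _ (fun p => IsUnit p.2.2), cardA2u ℓ k hℓ D hD]
  have : Nat.card {p : ZMod (ℓ ^ (k+1)) × ZMod (ℓ ^ (k+1)) × ZMod (ℓ ^ (k+1)) //
      (p.1 ^ 2 + p.2.1 * p.2.2 = D ∧ ¬ IsUnit p.2.1) ∧ ¬ IsUnit p.2.2} =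
      Nat.card {p : ZMod (ℓ ^ (k+1)) × ZMod (ℓ ^ (k+1)) × ZMod (ℓ ^ (k+1)) //
      p.1 ^ 2 + p.2.1 * p.2.2 = D ∧ (ℓ : ZMod (ℓ ^ (k+1))) ∣ p.1 ∧ (ℓ : ZMod (ℓ ^ (k+1))) ∣ p.2.1
        ∧ (ℓ : ZMod (ℓ ^ (k+1))) ∣ p.2.2} := by
    refine Nat.card_congr (Equiv.subtypeEquivRight ?_)
    rintro ⟨x, b, c⟩
    simp only [nu]
    constructor
    · rintro ⟨⟨hp, hb⟩, hc⟩
      refine ⟨hp, ?_, hb, hc⟩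
      rw [← nu]
      intro hx
      apply (nu _).2 _ (hx.pow 2)
      have : x ^ 2 = D - b * c := by rw [← hp]; ring
      rw [this]
      exact dvd_sub hD (Dvd.dvd.mul_right hb _)
    · rintro ⟨hp, -, hb, hc⟩
      exact ⟨⟨hp, hb⟩, hc⟩
  rw [this]
  obtain ⟨m, hm⟩ : ∃ m, ℓ = m + 1 := ⟨ℓ - 1, by have := hℓ.one_lt; omega⟩
  rw [← add_assoc, add_right_comm]
  congr 1
  rw [hm, Nat.add_sub_cancel]
  ring

noncomputable def gmap (ℓ k : ℕ) (p : Fin ℓ × ZMod (ℓ ^ k)) : ℕ := p.2.val + p.1.val * ℓ ^ k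

lemma gmap_lt (ℓ k : ℕ) (hℓ : ℓ.Prime) (p : Fin ℓ × ZMod (ℓ ^ k)) : gmap ℓ k p < ℓ ^ (k+1) := by
  have : NeZero (ℓ ^ k) := ⟨pow_ne_zero _ hℓ.ne_zero⟩
  unfold gmap
  have h1 := p.1.isLt
  have h2 := ZMod.val_lt p.2
  calc _ < ℓ ^ k + p.1.val * ℓ ^ k := by omega
    _ = (p.1.val + 1) * ℓ ^ k := by ring
    _ ≤ ℓ * ℓ ^ k := Nat.mul_le_mul_right _ h1
    _ = ℓ ^ (k+1) := by ring

lemma gmap_inj (ℓ k : ℕ) (hℓ : ℓ.Prime) (p q : Fin ℓ × ZMod (ℓ ^ k))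
    (h : gmap ℓ k p = gmap ℓ k q) : p = q := by
  have : NeZero (ℓ ^ k) := ⟨pow_ne_zero _ hℓ.ne_zero⟩
  unfold gmap at h
  have hp := ZMod.val_lt p.2
  have hq := ZMod.val_lt q.2
  have h1 := congrArg (· % ℓ ^ k) h
  have h2 := congrArg (· / ℓ ^ k) h
  simp only [Nat.add_mul_mod_self_right, Nat.mod_eq_of_lt hp, Nat.mod_eq_of_lt hq] at h1
  simp only [Nat.add_mul_div_right _ _ (Nat.pos_of_neZero (ℓ ^ k)), Nat.div_eq_of_lt hp,
    Nat.div_eq_of_lt hq, zero_add] at h2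
  exact Prod.ext (Fin.ext h2) (ZMod.val_injective _ h1)

lemma gmap_surj (ℓ k : ℕ) (hℓ : ℓ.Prime) (n : ℕ) (hn : n < ℓ ^ (k+1)) :
    ∃ p, gmap ℓ k p = n := by
  have : NeZero (ℓ ^ k) := ⟨pow_ne_zero _ hℓ.ne_zero⟩
  refine ⟨(⟨n / ℓ ^ k, ?_⟩, (n : ZMod (ℓ ^ k))), ?_⟩
  · rw [Nat.div_lt_iff_lt_mul (Nat.pos_of_neZero _)]
    calc n < _ := hn
      _ = _ := by ring
  · unfold gmap
    simp only [ZMod.val_natCast]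
    exact Nat.mod_add_div' n (ℓ ^ k)

lemma gmap_cast (ℓ k : ℕ) (hℓ : ℓ.Prime) (p : Fin ℓ × ZMod (ℓ ^ k)) :
    ((gmap ℓ k p : ℕ) : ZMod (ℓ ^ k)) = p.2 := by
  have : NeZero (ℓ ^ k) := ⟨pow_ne_zero _ hℓ.ne_zero⟩
  have h0 := ZMod.natCast_self (ℓ ^ k)
  unfold gmap
  rw [Nat.cast_add, Nat.cast_mul, h0]
  simp

lemma card_imprim (ℓ k : ℕ) (hℓ : ℓ.Prime) (D : ℤ) :
    Nat.card {p : ZMod (ℓ ^ (k+2)) × ZMod (ℓ ^ (k+2)) × ZMod (ℓ ^ (k+2)) //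
      p.1 ^ 2 + p.2.1 * p.2.2 = (((ℓ : ℤ) ^ 2 * D : ℤ) : ZMod (ℓ ^ (k+2))) ∧
      (ℓ : ZMod (ℓ ^ (k+2))) ∣ p.1 ∧ (ℓ : ZMod (ℓ ^ (k+2))) ∣ p.2.1
        ∧ (ℓ : ZMod (ℓ ^ (k+2))) ∣ p.2.2} = ℓ ^ 3 * MM ℓ k (D : ZMod (ℓ ^ k)) := by
  have : NeZero (ℓ ^ k) := ⟨pow_ne_zero _ hℓ.ne_zero⟩
  have : NeZero (ℓ ^ (k+2)) := ⟨pow_ne_zero _ hℓ.ne_zero⟩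
  have hl0 : (ℓ : ℤ) ≠ 0 := by exact_mod_cast hℓ.ne_zero
  -- the key equivalence
  have key : ∀ x b c : ℕ, (((ℓ * x : ℕ) : ZMod (ℓ ^ (k+2))) ^ 2 +
      ((ℓ * b : ℕ) : ZMod (ℓ ^ (k+2))) * ((ℓ * c : ℕ) : ZMod (ℓ ^ (k+2))) =
      (((ℓ : ℤ) ^ 2 * D : ℤ) : ZMod (ℓ ^ (k+2)))) ↔
      (x : ZMod (ℓ ^ k)) ^ 2 + (b : ZMod (ℓ ^ k)) * (c : ZMod (ℓ ^ k)) = (D : ZMod (ℓ ^ k)) := by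
    intro x b c
    have e1 : (((ℓ * x : ℕ) : ZMod (ℓ ^ (k+2))) ^ 2 +
      ((ℓ * b : ℕ) : ZMod (ℓ ^ (k+2))) * ((ℓ * c : ℕ) : ZMod (ℓ ^ (k+2)))) =
      (((ℓ : ℤ) ^ 2 * (x ^ 2 + b * c) : ℤ) : ZMod (ℓ ^ (k+2))) := by push_cast; ring
    have e2 : (x : ZMod (ℓ ^ k)) ^ 2 + (b : ZMod (ℓ ^ k)) * (c : ZMod (ℓ ^ k)) =
      ((x ^ 2 + b * c : ℤ) : ZMod (ℓ ^ k)) := by push_cast; ring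
    rw [e1, e2, ZMod.intCast_eq_intCast_iff_dvd_sub, ZMod.intCast_eq_intCast_iff_dvd_sub,
      ← mul_sub]
    have : ((ℓ ^ (k+2) : ℕ) : ℤ) = (ℓ : ℤ) ^ 2 * ((ℓ ^ k : ℕ) : ℤ) := by push_cast; ring
    rw [this]
    exact mul_dvd_mul_iff_left (pow_ne_zero 2 hl0)
  have ginj : ∀ p q : Fin ℓ × ZMod (ℓ ^ k), ((ℓ * gmap ℓ k p : ℕ) : ZMod (ℓ ^ (k+2))) =
      ((ℓ * gmap ℓ k q : ℕ) : ZMod (ℓ ^ (k+2))) → p = q := by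
    intro p q h
    have lt : ∀ p, ℓ * gmap ℓ k p < ℓ ^ (k+2) := fun p => by
      have := Nat.mul_lt_mul_of_pos_left (gmap_lt ℓ k hℓ p) hℓ.pos
      calc _ < _ := this
        _ = _ := by ring
    have h2 := congrArg ZMod.val h
    rw [ZMod.val_natCast, ZMod.val_natCast, Nat.mod_eq_of_lt (lt p), Nat.mod_eq_of_lt (lt q)] at h2
    exact gmap_inj ℓ k hℓ p q (Nat.eq_of_mul_eq_mul_left hℓ.pos h2)
  have gsurj : ∀ x : ZMod (ℓ ^ (k+2)), (ℓ : ZMod (ℓ ^ (k+2))) ∣ x →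
      ∃ p, ((ℓ * gmap ℓ k p : ℕ) : ZMod (ℓ ^ (k+2))) = x := by
    rintro x ⟨y, rfl⟩
    obtain ⟨p, hp⟩ := gmap_surj ℓ k hℓ (y.val % ℓ ^ (k+1))
      (Nat.mod_lt _ (pow_pos hℓ.pos _))
    refine ⟨p, ?_⟩
    rw [hp]
    have h3 : ℓ * (y.val % ℓ ^ (k+1)) = (ℓ * y.val) % ℓ ^ (k+2) := by
      rw [← Nat.mul_mod_mul_left]; congr 1; ring
    rw [h3, ZMod.natCast_mod, Nat.cast_mul, ZMod.natCast_zmod_val]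
  have h3 : ℓ ^ 3 = Nat.card (Fin ℓ × Fin ℓ × Fin ℓ) := by
    simp; ring
  unfold MM
  rw [h3, ← Nat.card_prod]
  refine (Nat.card_congr (Equiv.ofBijective (fun q => ⟨(((ℓ * gmap ℓ k (q.1.1, q.2.1.1) : ℕ) : ZMod (ℓ ^ (k+2))),
    ((ℓ * gmap ℓ k (q.1.2.1, q.2.1.2.1) : ℕ) : ZMod (ℓ ^ (k+2))),
    ((ℓ * gmap ℓ k (q.1.2.2, q.2.1.2.2) : ℕ) : ZMod (ℓ ^ (k+2)))), ?_⟩) ⟨?_, ?_⟩)).symm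
  rotate_right
  · refine ⟨?_, ?_, ?_, ?_⟩
    · rw [key, gmap_cast ℓ k hℓ, gmap_cast ℓ k hℓ, gmap_cast ℓ k hℓ]
      exact q.2.2
    all_goals
      simp only [Nat.cast_mul]
      exact Dvd.intro _ rfl
  · rintro ⟨⟨i, j, k⟩, ⟨⟨x, b, c⟩, hp⟩⟩ ⟨⟨i', j', k'⟩, ⟨⟨x', b', c'⟩, hp'⟩⟩ e
    simp only [Subtype.mk.injEq, Prod.mk.injEq] at e
    obtain ⟨e1, e2, e3⟩ := e
    have e1 := ginj _ _ e1
    have e2 := ginj _ _ e2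
    have e3 := ginj _ _ e3
    simp only [Prod.mk.injEq] at e1 e2 e3
    obtain ⟨rfl, rfl⟩ := e1
    obtain ⟨rfl, rfl⟩ := e2
    obtain ⟨rfl, rfl⟩ := e3
    rfl
  · rintro ⟨⟨x, b, c⟩, hp, hx, hb, hc⟩
    simp only at hp hx hb hc
    obtain ⟨p, rfl⟩ := gsurj x hx
    obtain ⟨q, rfl⟩ := gsurj b hb
    obtain ⟨r, rfl⟩ := gsurj c hc
    rw [key, gmap_cast ℓ k hℓ, gmap_cast ℓ k hℓ, gmap_cast ℓ k hℓ] at hp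
    exact ⟨⟨(p.1, q.1, r.1), ⟨(p.2, q.2, r.2), hp⟩⟩, rfl⟩

lemma MM_rec (ℓ k : ℕ) (hℓ : ℓ.Prime) (D : ℤ) :
    MM ℓ (k+2) (((ℓ : ℤ) ^ 2 * D : ℤ) : ZMod (ℓ ^ (k+2))) + ℓ ^ (2 * k + 2) =
      ℓ ^ (2 * k + 4) + ℓ ^ 3 * MM ℓ k (D : ZMod (ℓ ^ k)) := by
  rw [← card_imprim ℓ k hℓ D]
  exact MM_nonunit ℓ (k+1) hℓ _ (by push_cast; exact ⟨ℓ * D, by ring⟩)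

lemma MM_one (ℓ k : ℕ) (hℓ : ℓ.Prime) (u : ℤ) (hu : ¬ (ℓ : ℤ) ∣ u) :
    MM ℓ (k+2) (((ℓ : ℤ) * u : ℤ) : ZMod (ℓ ^ (k+2))) + ℓ ^ (2 * k + 2) = ℓ ^ (2 * k + 4) := by
  rw [show 2 * k + 2 = 2 * (k + 1) by ring, MM_nonunit ℓ (k+1) hℓ _ (by push_cast; exact Dvd.intro _ rfl)]
  have : IsEmpty {p : ZMod (ℓ ^ (k+2)) × ZMod (ℓ ^ (k+2)) × ZMod (ℓ ^ (k+2)) //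
      p.1 ^ 2 + p.2.1 * p.2.2 = (((ℓ : ℤ) * u : ℤ) : ZMod (ℓ ^ (k+2))) ∧
      (ℓ : ZMod (ℓ ^ (k+2))) ∣ p.1 ∧ (ℓ : ZMod (ℓ ^ (k+2))) ∣ p.2.1
        ∧ (ℓ : ZMod (ℓ ^ (k+2))) ∣ p.2.2} := by
    constructor
    rintro ⟨⟨x, b, c⟩, hp, ⟨x', hx⟩, ⟨b', hb⟩, ⟨c', hc⟩⟩
    simp only at hp hx hb hc
    subst hx hb hc
    obtain ⟨x, rfl⟩ := ZMod.intCast_surjective x'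
    obtain ⟨b, rfl⟩ := ZMod.intCast_surjective b'
    obtain ⟨c, rfl⟩ := ZMod.intCast_surjective c'
    have : (((ℓ * (ℓ * x ^ 2 + ℓ * b * c) : ℤ)) : ZMod (ℓ ^ (k+2))) =
      (((ℓ : ℤ) * u : ℤ) : ZMod (ℓ ^ (k+2))) := by rw [← hp]; push_cast; ring
    rw [ZMod.intCast_eq_intCast_iff_dvd_sub, ← mul_sub] at this
    have e : ((ℓ ^ (k+2) : ℕ) : ℤ) = (ℓ : ℤ) * (ℓ * ((ℓ ^ k : ℕ) : ℤ)) := by push_cast; ring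
    have hl0 : (ℓ : ℤ) ≠ 0 := by exact_mod_cast hℓ.ne_zero
    rw [e, mul_dvd_mul_iff_left hl0] at this
    have h2 := dvd_trans (Dvd.intro _ rfl) this
    apply hu
    have h3 : u = (u - (ℓ * x ^ 2 + ℓ * b * c)) + ℓ * (x ^ 2 + b * c) := by ring
    rw [h3]
    exact dvd_add h2 (Dvd.intro _ rfl)
  rw [Nat.card_of_isEmpty]
  ring

lemma MM_zero (ℓ : ℕ) (D : ZMod (ℓ ^ 0)) : MM ℓ 0 D = 1 := by
  unfold MM
  have : Subsingleton (ZMod (ℓ ^ 0)) := by rw [pow_zero]; infer_instance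
  rw [Nat.card_eq_one_iff_unique]
  exact ⟨inferInstance, ⟨⟨(0, 0, 0), Subsingleton.elim _ _⟩⟩⟩

lemma MM_k1 (ℓ : ℕ) (hℓ : ℓ.Prime) : MM ℓ 1 0 = ℓ ^ 2 := by
  have h := MM_nonunit ℓ 0 hℓ 0 (dvd_zero _)
  have hl : ((ℓ : ℕ) : ZMod (ℓ ^ (0 + 1))) = 0 := by
    have := ZMod.natCast_self (ℓ ^ (0+1))
    simpa using this
  have : Nat.card {p : ZMod (ℓ ^ (0+1)) × ZMod (ℓ ^ (0+1)) × ZMod (ℓ ^ (0+1)) //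
      p.1 ^ 2 + p.2.1 * p.2.2 = 0 ∧ (ℓ : ZMod (ℓ ^ (0+1))) ∣ p.1 ∧ (ℓ : ZMod (ℓ ^ (0+1))) ∣ p.2.1
        ∧ (ℓ : ZMod (ℓ ^ (0+1))) ∣ p.2.2} = 1 := by
    rw [Nat.card_eq_one_iff_unique, hl]
    simp only [zero_dvd_iff]
    refine ⟨⟨?_⟩, ⟨⟨(0, 0, 0), by simp⟩⟩⟩
    rintro ⟨⟨x, b, c⟩, h1, h2, h3, h4⟩ ⟨⟨x', b', c'⟩, h1', h2', h3', h4'⟩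
    simp only at h2 h3 h4 h2' h3' h4'
    subst h2 h3 h4 h2' h3' h4'
    rfl
  rw [this] at h
  simpa using h

lemma MM_gen (ℓ k : ℕ) (hℓ : ℓ.Prime) (u : ℤ) (t : ℕ) :
    (ℓ : ℤ) * MM ℓ (k + 2 * t) (((ℓ : ℤ) ^ (2 * t) * u : ℤ) : ZMod (ℓ ^ (k + 2 * t))) =
      (ℓ : ℤ) ^ (3 * t + 1) * MM ℓ k (u : ZMod (ℓ ^ k)) +
      (ℓ : ℤ) ^ (2 * k + 3 * t) * (ℓ + 1) * ((ℓ : ℤ) ^ t - 1) := by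
  induction t with
  | zero => simp
  | succ t ih =>
    have h := MM_rec ℓ (k + 2 * t) hℓ ((ℓ : ℤ) ^ (2 * t) * u)
    rw [show (ℓ : ℤ) ^ 2 * ((ℓ : ℤ) ^ (2 * t) * u) = (ℓ : ℤ) ^ (2 * (t + 1)) * u by ring] at h
    have h' : (MM ℓ (k + 2 * (t + 1)) (((ℓ : ℤ) ^ (2 * (t + 1)) * u : ℤ) : ZMod (ℓ ^ (k + 2 * (t + 1)))) : ℤ) +
      (ℓ : ℤ) ^ (2 * (k + 2 * t) + 2) = (ℓ : ℤ) ^ (2 * (k + 2 * t) + 4) +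
        (ℓ : ℤ) ^ 3 * MM ℓ (k + 2 * t) (((ℓ : ℤ) ^ (2 * t) * u : ℤ) : ZMod (ℓ ^ (k + 2 * t))) := by
      exact_mod_cast h
    linear_combination (ℓ : ℤ) * h' + (ℓ : ℤ) ^ 3 * ih

lemma vval_spec (ℓ k : ℕ) (D : ZMod (ℓ ^ k)) (i : ℕ) (h : vval ℓ k D = i) :
    ∃ u : ℤ, D = (((ℓ : ℤ) ^ i * u : ℤ) : ZMod (ℓ ^ k)) ∧ (i < k → ¬ (ℓ : ℤ) ∣ u) := by
  have h1 : ∃ y : ZMod (ℓ ^ k), D = (ℓ : ZMod (ℓ ^ k)) ^ i * y := by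
    rw [← h]
    exact Nat.findGreatest_spec (P := fun t => ∃ y : ZMod (ℓ ^ k), D = (ℓ : ZMod (ℓ ^ k)) ^ t * y)
      (Nat.zero_le k) ⟨D, by simp⟩
  obtain ⟨y, hy⟩ := h1
  obtain ⟨u, rfl⟩ := ZMod.intCast_surjective y
  refine ⟨u, by rw [hy]; push_cast; rfl, ?_⟩
  rintro hi ⟨w, rfl⟩
  refine Nat.findGreatest_is_greatest (P := fun t => ∃ y : ZMod (ℓ ^ k), D = (ℓ : ZMod (ℓ ^ k)) ^ t * y)
    (n := k) (k := i + 1) ?_ hi ⟨(w : ZMod (ℓ ^ k)), ?_⟩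
  · change vval ℓ k D < i + 1
    omega
  · rw [hy]; push_cast; ring

lemma isUnit_int (ℓ k : ℕ) (hℓ : ℓ.Prime) (u : ℤ) (hu : ¬ (ℓ : ℤ) ∣ u) :
    IsUnit (u : ZMod (ℓ ^ (k+1))) := by
  by_contra h
  rw [nonunit_iff ℓ (k+1) hℓ (by omega), dvd_int_iff ℓ (k+1) (by omega)] at h
  exact hu h

lemma sq_up (ℓ k t : ℕ) (u : ℤ) (h : IsSquare (u : ZMod (ℓ ^ k))) :
    IsSquare (((ℓ : ℤ) ^ (2 * t) * u : ℤ) : ZMod (ℓ ^ (k + 2 * t))) := by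
  obtain ⟨w, hw⟩ := h
  obtain ⟨w, rfl⟩ := ZMod.intCast_surjective w
  refine ⟨((ℓ ^ t * w : ℤ) : ZMod _), ?_⟩
  rw [← Int.cast_mul, ZMod.intCast_eq_intCast_iff_dvd_sub] at hw ⊢
  obtain ⟨m, hm⟩ := hw
  refine ⟨m, ?_⟩
  push_cast at hm ⊢
  linear_combination (ℓ : ℤ) ^ (2 * t) * hm

lemma sq_down (ℓ k t : ℕ) (hℓ : ℓ.Prime) (u : ℤ)
    (h : IsSquare (((ℓ : ℤ) ^ (2 * t) * u : ℤ) : ZMod (ℓ ^ (k + 2 * t)))) :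
    IsSquare (u : ZMod (ℓ ^ k)) := by
  have hl0 : (ℓ : ℤ) ≠ 0 := by exact_mod_cast hℓ.ne_zero
  obtain ⟨w, hw⟩ := h
  obtain ⟨w, rfl⟩ := ZMod.intCast_surjective w
  rw [← Int.cast_mul, ZMod.intCast_eq_intCast_iff_dvd_sub] at hw
  obtain ⟨m, hm⟩ := hw
  push_cast at hm
  have h1 : ((ℓ : ℤ) ^ t) ^ 2 ∣ w ^ 2 := ⟨u + ℓ ^ k * m, by linear_combination hm⟩
  rw [Int.pow_dvd_pow_iff two_ne_zero] at h1
  obtain ⟨z, rfl⟩ := h1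
  refine ⟨(z : ZMod _), ?_⟩
  rw [← Int.cast_mul, ZMod.intCast_eq_intCast_iff_dvd_sub]
  refine ⟨m, ?_⟩
  push_cast
  apply mul_left_cancel₀ (pow_ne_zero (2 * t) hl0)
  linear_combination hm

lemma odd_nonsq_s12 (ℓ k : ℕ) (hℓ : ℓ.Prime) (u : ℤ) (hu : ¬ (ℓ : ℤ) ∣ u) :
    ¬ IsSquare (((ℓ : ℤ) * u : ℤ) : ZMod (ℓ ^ (k+2))) := by
  have hl0 : (ℓ : ℤ) ≠ 0 := by exact_mod_cast hℓ.ne_zero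
  have hp : Prime (ℓ : ℤ) := Nat.prime_iff_prime_int.1 hℓ
  rintro ⟨w, hw⟩
  obtain ⟨w, rfl⟩ := ZMod.intCast_surjective w
  rw [← Int.cast_mul, ZMod.intCast_eq_intCast_iff_dvd_sub] at hw
  obtain ⟨m, hm⟩ := hw
  push_cast at hm
  have h1 : (ℓ : ℤ) ∣ w ^ 2 := ⟨u + ℓ ^ (k+1) * m, by linear_combination hm⟩
  obtain ⟨z, rfl⟩ := hp.dvd_of_dvd_pow h1
  apply hu
  refine ⟨z ^ 2 - ℓ ^ k * m, ?_⟩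
  apply mul_left_cancel₀ hl0
  linear_combination -hm

lemma vval_self (ℓ k : ℕ) (D : ZMod (ℓ ^ k)) (h : vval ℓ k D = k) : D = 0 := by
  obtain ⟨u, hu, -⟩ := vval_spec ℓ k D k h
  have h0 := ZMod.natCast_self (ℓ ^ k)
  rw [Nat.cast_pow] at h0
  rw [hu]; push_cast; rw [h0, zero_mul]

lemma final_cancel (ℓ : ℕ) (hℓ : ℓ.Prime) (a b : ℕ) (h : (ℓ : ℤ) * a = ℓ * b) : a = b := by
  have hl0 : (ℓ : ℤ) ≠ 0 := by exact_mod_cast hℓ.ne_zero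
  exact_mod_cast mul_left_cancel₀ hl0 h

lemma even_nonsq (ℓ k t : ℕ) (hℓ : ℓ.Prime) (hodd : ℓ ≠ 2) (D : ZMod (ℓ ^ k))
    (hv : vval ℓ k D = 2 * t) (hk : 2 * t < k) (hs : ¬ IsSquare D) :
    MM ℓ k D = (ℓ ^ (t + 1) + ℓ ^ t - 2) * ℓ ^ (2 * k - t - 1) := by
  obtain ⟨j, rfl⟩ : ∃ j, k = j + 1 + 2 * t := ⟨k - 1 - 2 * t, by omega⟩
  obtain ⟨u, rfl, hu⟩ := vval_spec _ _ _ _ hv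
  have h := MM_gen ℓ (j + 1) hℓ u t
  rw [MM_unit_nonsq ℓ j hℓ hodd _ (isUnit_int ℓ j hℓ u (hu hk)) (fun h => hs (sq_up _ _ _ _ h))] at h
  apply final_cancel ℓ hℓ
  rw [h]
  have h1 : 1 ≤ ℓ := hℓ.one_lt.le
  have h2 : 2 ≤ ℓ ^ (t + 1) + ℓ ^ t := by
    have := Nat.one_le_pow t ℓ hℓ.pos
    have := Nat.one_le_pow (t + 1) ℓ hℓ.pos
    omega
  rw [show 2 * (j + 1 + 2 * t) - t - 1 = 2 * j + 3 * t + 1 by omega]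
  push_cast [h1, h2]
  ring

lemma even_sq (ℓ k t : ℕ) (hℓ : ℓ.Prime) (hodd : ℓ ≠ 2) (D : ZMod (ℓ ^ k))
    (hv : vval ℓ k D = 2 * t) (hk : 2 * t < k) (hs : IsSquare D) :
    MM ℓ k D = (ℓ + 1) * ℓ ^ (2 * k - 1) := by
  obtain ⟨j, rfl⟩ : ∃ j, k = j + 1 + 2 * t := ⟨k - 1 - 2 * t, by omega⟩
  obtain ⟨u, rfl, hu⟩ := vval_spec _ _ _ _ hv
  have h := MM_gen ℓ (j + 1) hℓ u t
  rw [MM_unit_sq ℓ j hℓ hodd _ (isUnit_int ℓ j hℓ u (hu hk)) (sq_down _ _ _ hℓ _ hs)] at h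
  apply final_cancel ℓ hℓ
  rw [h]
  rw [show 2 * (j + 1 + 2 * t) - 1 = 2 * j + 4 * t + 1 by omega]
  push_cast
  ring

lemma odd_count (ℓ k t : ℕ) (hℓ : ℓ.Prime) (D : ZMod (ℓ ^ k)) (ht : 1 ≤ t)
    (hv : vval ℓ k D = 2 * t - 1) (hk : 2 * t - 1 < k) :
    MM ℓ k D = (ℓ ^ (t + 1) + ℓ ^ t - ℓ - 1) * ℓ ^ (2 * k - t - 1) := by
  obtain ⟨t, rfl⟩ : ∃ s, t = s + 1 := ⟨t - 1, by omega⟩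
  rw [show 2 * (t + 1) - 1 = 2 * t + 1 by omega] at hv hk
  obtain ⟨j, rfl⟩ : ∃ j, k = j + 2 + 2 * t := ⟨k - 2 - 2 * t, by omega⟩
  obtain ⟨u, rfl, hu⟩ := vval_spec _ _ _ _ hv
  have h := MM_gen ℓ (j + 2) hℓ (ℓ * u) t
  have h3 : (MM ℓ (j+2) (((ℓ : ℤ) * u : ℤ) : ZMod (ℓ ^ (j+2))) : ℤ) + (ℓ : ℤ) ^ (2 * j + 2) =
      (ℓ : ℤ) ^ (2 * j + 4) := by exact_mod_cast MM_one ℓ j hℓ u (hu hk)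
  rw [show (ℓ : ℤ) ^ (2 * t) * (ℓ * u) = (ℓ : ℤ) ^ (2 * t + 1) * u by ring] at h
  apply final_cancel ℓ hℓ
  rw [h, eq_sub_of_add_eq h3]
  have h2 : ℓ + 1 ≤ ℓ ^ (t + 1 + 1) + ℓ ^ (t + 1) := by
    have := Nat.one_le_pow (t+1) ℓ hℓ.pos
    have h4 : ℓ ^ (t + 1 + 1) = ℓ ^ (t + 1) * ℓ := pow_succ _ _
    nlinarith
  rw [show 2 * (j + 2 + 2 * t) - (t + 1) - 1 = 2 * j + 3 * t + 2 by omega, Nat.sub_sub]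
  push_cast [h2]
  ring

lemma odd_sq_false (ℓ k : ℕ) (hℓ : ℓ.Prime) (D : ZMod (ℓ ^ k))
    (hv : Odd (vval ℓ k D)) (hk : vval ℓ k D < k) : ¬ IsSquare D := by
  obtain ⟨t, ht⟩ := hv
  rw [ht] at hk
  obtain ⟨j, rfl⟩ : ∃ j, k = j + 2 + 2 * t := ⟨k - 2 - 2 * t, by omega⟩
  obtain ⟨u, rfl, hu⟩ := vval_spec _ _ _ _ ht
  intro hs
  rw [show (ℓ : ℤ) ^ (2 * t + 1) * u = (ℓ : ℤ) ^ (2 * t) * (ℓ * u) by ring] at hs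
  exact odd_nonsq_s12 ℓ j hℓ u (hu hk) (sq_down _ _ _ hℓ _ hs)

lemma full_even (ℓ m : ℕ) (hℓ : ℓ.Prime) (hm : 1 ≤ m) :
    MM ℓ (2 * m) 0 = (ℓ ^ (m + 1) + ℓ ^ m - 1) * ℓ ^ (3 * m - 1) := by
  have h := MM_gen ℓ 0 hℓ 0 m
  rw [MM_zero, mul_zero, Int.cast_zero, zero_add] at h
  apply final_cancel ℓ hℓ
  rw [h]
  obtain ⟨m, rfl⟩ : ∃ s, m = s + 1 := ⟨m - 1, by omega⟩
  have h2 : 1 ≤ ℓ ^ (m + 1 + 1) + ℓ ^ (m + 1) := by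
    have := Nat.one_le_pow (m + 1) ℓ hℓ.pos
    omega
  rw [show 3 * (m + 1) - 1 = 3 * m + 2 by omega]
  push_cast [h2]
  ring

lemma full_odd (ℓ m : ℕ) (hℓ : ℓ.Prime) :
    MM ℓ (2 * m + 1) 0 = (ℓ ^ (m + 1) + ℓ ^ m - 1) * ℓ ^ (3 * m + 1) := by
  have h := MM_gen ℓ 1 hℓ 0 m
  rw [mul_zero, Int.cast_zero, Int.cast_zero, MM_k1 ℓ hℓ] at h
  rw [add_comm (2 * m) 1]
  apply final_cancel ℓ hℓ
  rw [h]
  have h2 : 1 ≤ ℓ ^ (m + 1) + ℓ ^ m := by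
    have := Nat.one_le_pow m ℓ hℓ.pos
    omega
  push_cast [h2]
  ring

/-- The count `N(f)` of matrices in `GL₂(ℤ/ℓᵏℤ)` with characteristic polynomial
`f = X² − TX + S` (`S` a unit), in terms of `i = v(D)` and whether `D = T² − 4S`
is a square; in particular `N(f)` depends only on this data. -/
theorem stmt_12 (ℓ k : ℕ) (hℓ : ℓ.Prime) (hodd : ℓ ≠ 2) (hk : 1 ≤ k)
    (T S : ZMod (ℓ ^ k)) (hS : IsUnit S) :
    (vval ℓ k (T ^ 2 - 4 * S) = 0 → ¬ IsSquare (T ^ 2 - 4 * S) →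
      Ncount ℓ k T S = (ℓ - 1) * ℓ ^ (2 * k - 1)) ∧
    (vval ℓ k (T ^ 2 - 4 * S) = 0 → IsSquare (T ^ 2 - 4 * S) →
      Ncount ℓ k T S = (ℓ + 1) * ℓ ^ (2 * k - 1)) ∧
    (∀ t : ℕ, 1 ≤ t → vval ℓ k (T ^ 2 - 4 * S) = 2 * t - 1 → 2 * t - 1 < k →
      ¬ IsSquare (T ^ 2 - 4 * S) →
      Ncount ℓ k T S = (ℓ ^ (t + 1) + ℓ ^ t - ℓ - 1) * ℓ ^ (2 * k - t - 1)) ∧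
    (∀ t : ℕ, 0 < t → vval ℓ k (T ^ 2 - 4 * S) = 2 * t → 2 * t < k →
      ¬ IsSquare (T ^ 2 - 4 * S) →
      Ncount ℓ k T S = (ℓ ^ (t + 1) + ℓ ^ t - 2) * ℓ ^ (2 * k - t - 1)) ∧
    (∀ t : ℕ, 0 < t → vval ℓ k (T ^ 2 - 4 * S) = 2 * t → 2 * t < k →
      IsSquare (T ^ 2 - 4 * S) →
      Ncount ℓ k T S = (ℓ + 1) * ℓ ^ (2 * k - 1)) ∧
    (∀ m : ℕ, vval ℓ k (T ^ 2 - 4 * S) = k → k = 2 * m →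
      Ncount ℓ k T S = (ℓ ^ (m + 1) + ℓ ^ m - 1) * ℓ ^ (3 * m - 1)) ∧
    (∀ m : ℕ, vval ℓ k (T ^ 2 - 4 * S) = k → k = 2 * m + 1 →
      Ncount ℓ k T S = (ℓ ^ (m + 1) + ℓ ^ m - 1) * ℓ ^ (3 * m + 1)) ∧
    (Odd (vval ℓ k (T ^ 2 - 4 * S)) → vval ℓ k (T ^ 2 - 4 * S) < k →
      IsSquare (T ^ 2 - 4 * S) → Ncount ℓ k T S = 0) ∧
    (vval ℓ k (T ^ 2 - 4 * S) = k → ¬ IsSquare (T ^ 2 - 4 * S) →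
      Ncount ℓ k T S = 0) := by
  rw [ncount_eq ℓ k hℓ hodd hk T S hS]
  generalize T ^ 2 - 4 * S = D
  refine ⟨?_, ?_, ?_, ?_, ?_, ?_, ?_, ?_, ?_⟩
  · intro hv hs
    rw [even_nonsq ℓ k 0 hℓ hodd D hv (by omega) hs]
    simp only [zero_add, pow_one, pow_zero, Nat.sub_zero]
    rw [show ℓ + 1 - 2 = ℓ - 1 by omega]
  · intro hv hs
    exact even_sq ℓ k 0 hℓ hodd D hv (by omega) hs
  · intro t ht hv hk _
    exact odd_count ℓ k t hℓ D ht hv hk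
  · intro t _ hv hk hs
    exact even_nonsq ℓ k t hℓ hodd D hv hk hs
  · intro t _ hv hk hs
    exact even_sq ℓ k t hℓ hodd D hv hk hs
  · intro m hv hm
    rw [vval_self ℓ k D hv]
    subst hm
    exact full_even ℓ m hℓ (by omega)
  · intro m hv hm
    rw [vval_self ℓ k D hv]
    subst hm
    exact full_odd ℓ m hℓ
  · intro hv hk hs
    exact absurd hs (odd_sq_false ℓ k hℓ D hv hk)
  · intro hv hs
    rw [vval_self ℓ k D hv] at hs
    exact absurd (IsSquare.zero) hs
end

section
/- As x → ∞, the sum over primes p ≤ x of 1/√p is asymptotically equivalent to 2√x / log x; that is, (Σ_{p ≤ x, p prime} 1/√p) · (log x)/(2√x) → 1 as x → ∞. -/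
open Filter Real

section helpers

open MeasureTheory Topology Set


/-- The Fejer kernel. -/
noncomputable def fejK (v : ℝ) : ℝ := 2 * (1 - Real.cos v) / v ^ 2

lemma fejK_nonneg (v : ℝ) : 0 ≤ fejK v := by
  unfold fejK
  have := Real.cos_le_one v
  have : 0 ≤ 1 - Real.cos v := by linarith
  positivity

lemma fejK_meas : Measurable fejK := by
  unfold fejK; fun_prop

lemma fejK_le (v : ℝ) : fejK v ≤ 5 * (1 + v ^ 2)⁻¹ := by
  rcases eq_or_ne v 0 with rfl | hv
  · simp [fejK]
  unfold fejK
  have h1 := Real.neg_one_le_cos v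
  have h2 := Real.one_sub_sq_div_two_le_cos (x := v)
  have : 0 < v ^ 2 := by positivity
  rw [← div_eq_mul_inv, div_le_div_iff₀ this (by positivity)]
  nlinarith [mul_le_mul_of_nonneg_right (show 1 - Real.cos v ≤ 2 by linarith) this.le]

lemma fejK_integrable : Integrable fejK := by
  refine (integrable_inv_one_add_sq.const_mul 5).mono' fejK_meas.aestronglyMeasurable ?_
  filter_upwards with v
  rw [Real.norm_eq_abs, abs_of_nonneg (fejK_nonneg v)]
  exact fejK_le v

lemma fejK_integral_pos : 0 < ∫ v, fejK v := by
  rw [integral_pos_iff_support_of_nonneg fejK_nonneg fejK_integrable]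
  have : Ioo (0:ℝ) 1 ⊆ Function.support fejK := by
    intro v hv
    have h1 : Real.cos v < 1 := by
      rw [← Real.cos_zero]
      exact Real.cos_lt_cos_of_nonneg_of_le_pi le_rfl (by linarith [Real.pi_gt_three, hv.2]) hv.1
    have : 0 < v := hv.1
    have h3 : 0 < 1 - Real.cos v := by linarith
    simp only [Function.mem_support, fejK]
    positivity
  refine lt_of_lt_of_le ?_ (measure_mono this)
  simp

lemma fejK_formula {v : ℝ} (hv : v ≠ 0) :
    ∫ t in (-1:ℝ)..1, ((1 - |t| : ℝ) : ℂ) * Complex.exp (Complex.I * t * v) = fejK v := by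
  have hc : Complex.I * v ≠ 0 := by simp [hv]
  set c : ℂ := Complex.I * v with hcdef
  have hcont : Continuous fun t : ℝ => ((1 - |t| : ℝ) : ℂ) * Complex.exp (Complex.I * t * v) := by
    fun_prop
  rw [← intervalIntegral.integral_add_adjacent_intervals (b := 0)
    (hcont.intervalIntegrable _ _) (hcont.intervalIntegrable _ _)]
  have e1 : ∀ t : ℝ, HasDerivAt (fun t : ℝ => Complex.exp (c * t)) (c * Complex.exp (c * t)) t := by
    intro t
    have : HasDerivAt (fun t : ℂ => Complex.exp (c * t)) (Complex.exp (c * t) * (c * 1)) (t : ℂ) :=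
      ((hasDerivAt_id (t : ℂ)).const_mul c).cexp
    have := this.comp_ofReal
    convert! this using 1
    ring
  have e2 : ∀ t : ℝ, HasDerivAt (fun t : ℝ => (t : ℂ)) 1 t := fun t =>
    Complex.ofRealCLM.hasDerivAt
  have h1 : ∫ t in (0:ℝ)..1, ((1 - |t| : ℝ) : ℂ) * Complex.exp (Complex.I * t * v)
      = Complex.exp c / c ^ 2 - 1 / c - 1 / c ^ 2 := by
    have : ∀ t ∈ uIcc (0:ℝ) 1, HasDerivAt
        (fun t : ℝ => (1 - (t : ℂ)) * Complex.exp (c * t) / c + Complex.exp (c * t) / c ^ 2)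
        (((1 - |t| : ℝ) : ℂ) * Complex.exp (Complex.I * t * v)) t := by
      intro t ht
      rw [uIcc_of_le zero_le_one] at ht
      have := ((((e2 t).const_sub 1).mul (e1 t)).div_const c).add ((e1 t).div_const (c ^ 2))
      convert! this using 1
      rw [abs_of_nonneg ht.1, show Complex.I * t * v = c * t by rw [hcdef]; ring]
      push_cast
      field_simp
      ring
    rw [intervalIntegral.integral_eq_sub_of_hasDerivAt this (hcont.intervalIntegrable _ _)]
    simp
    ring
  have h2 : ∫ t in (-1:ℝ)..0, ((1 - |t| : ℝ) : ℂ) * Complex.exp (Complex.I * t * v)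
      = 1 / c - 1 / c ^ 2 + Complex.exp (-c) / c ^ 2 := by
    have : ∀ t ∈ uIcc (-1:ℝ) 0, HasDerivAt
        (fun t : ℝ => (1 + (t : ℂ)) * Complex.exp (c * t) / c - Complex.exp (c * t) / c ^ 2)
        (((1 - |t| : ℝ) : ℂ) * Complex.exp (Complex.I * t * v)) t := by
      intro t ht
      rw [uIcc_of_le (by norm_num)] at ht
      have := ((((e2 t).const_add 1).mul (e1 t)).div_const c).sub ((e1 t).div_const (c ^ 2))
      convert! this using 1
      rw [abs_of_nonpos ht.2, show Complex.I * t * v = c * t by rw [hcdef]; ring]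
      push_cast
      field_simp
      ring
    rw [intervalIntegral.integral_eq_sub_of_hasDerivAt this (hcont.intervalIntegrable _ _)]
    simp
  rw [h1, h2]
  have h3 : Complex.cos v = (Complex.exp c + Complex.exp (-c)) / 2 := by
    rw [Complex.cos, hcdef]
    congr 3 <;> ring_nf
  have h4 : c ^ 2 = - (v : ℂ) ^ 2 := by
    rw [hcdef, mul_pow, Complex.I_sq]; ring
  have hv' : (v : ℂ) ≠ 0 := by exact_mod_cast hv
  unfold fejK
  push_cast
  rw [h3, h4]
  field_simp
  ring

lemma wi_fubini {b : ℝ → ℝ} (hb : Measurable b) {M : ℝ} (hM : ∀ u, |b u| ≤ M) {G : ℝ → ℝ → ℂ}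
    (h : ∀ ε : ℝ, 0 < ε → ∀ t : ℝ, ∫ u in Ioi (0:ℝ), (b u : ℂ) * Complex.exp (-(ε + Complex.I * t) * u)
      = G ε t) {ε : ℝ} (hε : 0 < ε) (y : ℝ) :
    ((∫ u in Ioi (0:ℝ), b u * Real.exp (-ε * u) * fejK (y - u) : ℝ) : ℂ) =
      ∫ t in (-1:ℝ)..1, ((1 - |t| : ℝ) : ℂ) * Complex.exp (Complex.I * t * y) * G ε t := by
  have hM0 : 0 ≤ M := (abs_nonneg _).trans (hM 0)
  rw [intervalIntegral.integral_of_le (by norm_num)]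
  simp_rw [← h ε hε, ← integral_const_mul]
  rw [integral_integral_swap]
  · rw [← integral_complex_ofReal]
    have hae : ∀ᵐ u ∂(volume.restrict (Ioi (0:ℝ))), u ≠ y := by
      apply ae_restrict_of_ae
      simp [ae_iff, measure_singleton]
    refine integral_congr_ae ?_
    filter_upwards [hae] with u hu
    have hv : y - u ≠ 0 := sub_ne_zero.mpr (Ne.symm hu)
    push_cast
    rw [← fejK_formula hv, intervalIntegral.integral_of_le (by norm_num), ← integral_const_mul]
    refine integral_congr_ae ?_
    filter_upwards with t
    have : Complex.exp (Complex.I * t * y) * Complex.exp (-(ε + Complex.I * t) * u)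
        = Complex.exp (-ε * u) * Complex.exp (Complex.I * t * ((y - u : ℝ) : ℂ)) := by
      rw [← Complex.exp_add, ← Complex.exp_add]; congr 1; push_cast; ring
    push_cast at this ⊢
    linear_combination (-(1 - ((|t| : ℝ) : ℂ)) * b u) * this
  · have hint : Integrable (fun p : ℝ × ℝ => (1:ℝ) * (M * Real.exp (-ε * p.2)))
        ((volume.restrict (Ioc (-1:ℝ) 1)).prod (volume.restrict (Ioi (0:ℝ)))) := by
      refine Integrable.mul_prod (f := fun _ => (1:ℝ)) (g := fun u => M * Real.exp (-ε * u))
        (integrable_const _) ?_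
      exact (integrableOn_exp_mul_Ioi (by linarith) 0).const_mul M
    refine hint.mono' ?_ ?_
    · apply Measurable.aestronglyMeasurable
      unfold Function.uncurry
      fun_prop
    · have hmem : ∀ᵐ p ∂((volume.restrict (Ioc (-1:ℝ) 1)).prod (volume.restrict (Ioi (0:ℝ)))),
          p ∈ (Ioc (-1:ℝ) 1) ×ˢ (Ioi (0:ℝ)) := by
        rw [Measure.prod_restrict]
        exact ae_restrict_mem (measurableSet_Ioc.prod measurableSet_Ioi)
      filter_upwards [hmem] with p hp
      obtain ⟨t, u⟩ := p
      obtain ⟨⟨ht1, ht2⟩, hu⟩ := hp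
      simp only [Function.uncurry, norm_mul, Complex.norm_real, Complex.norm_exp, Real.norm_eq_abs]
      have h1 : abs (1 - abs t) ≤ 1 := by
        have : |t| ≤ 1 := abs_le.mpr ⟨ht1.le, ht2⟩
        rw [abs_of_nonneg (by linarith)]
        linarith [abs_nonneg t]
      have h2 : (Complex.I * t * y).re = 0 := by simp
      have h3 : (-(ε + Complex.I * t) * u).re = -ε * u := by simp
      rw [h2, h3, Real.exp_zero, mul_one]
      gcongr
      exact hM u

lemma wi_limit {b : ℝ → ℝ} (hb : Measurable b) {M : ℝ} (hM : ∀ u, |b u| ≤ M) {G : ℝ → ℝ → ℂ}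
    (hG : ContinuousOn (fun p : ℝ × ℝ => G p.1 p.2) (Ici 0 ×ˢ univ))
    (h : ∀ ε : ℝ, 0 < ε → ∀ t : ℝ, ∫ u in Ioi (0:ℝ), (b u : ℂ) * Complex.exp (-(ε + Complex.I * t) * u)
      = G ε t) (y : ℝ) :
    ((∫ u in Ioi (0:ℝ), b u * fejK (y - u) : ℝ) : ℂ) =
      ∫ t in (-1:ℝ)..1, ((1 - |t| : ℝ) : ℂ) * Complex.exp (Complex.I * t * y) * G 0 t := by
  have hM0 : 0 ≤ M := (abs_nonneg _).trans (hM 0)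
  have hGc : ∀ ε : ℝ, 0 ≤ ε → Continuous (G ε) := by
    intro ε hε
    have : ContinuousOn ((fun p : ℝ × ℝ => G p.1 p.2) ∘ (fun t : ℝ => (ε, t))) univ :=
      hG.comp (by fun_prop) (fun t _ => ⟨hε, mem_univ _⟩)
    exact continuousOn_univ.mp this
  have hGt : ∀ t : ℝ, Tendsto (fun ε => G ε t) (𝓝[>] 0) (𝓝 (G 0 t)) := by
    intro t
    have : ContinuousOn ((fun p : ℝ × ℝ => G p.1 p.2) ∘ (fun ε : ℝ => (ε, t))) (Ici 0) :=
      hG.comp (by fun_prop) (fun e he => ⟨he, mem_univ _⟩)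
    exact (this 0 self_mem_Ici).mono_left (nhdsWithin_mono _ Ioi_subset_Ici_self)
  obtain ⟨C, hC⟩ := ((isCompact_Icc (a := (0:ℝ)) (b := 1)).prod
    (isCompact_Icc (a := (-1:ℝ)) (b := 1))).exists_bound_of_continuousOn
    (hG.mono (prod_mono Icc_subset_Ici_self (subset_univ _)))
  have hL : Tendsto (fun ε : ℝ => ((∫ u in Ioi (0:ℝ), b u * Real.exp (-ε * u) * fejK (y - u) : ℝ) : ℂ))
      (𝓝[>] 0) (𝓝 ((∫ u in Ioi (0:ℝ), b u * fejK (y - u) : ℝ) : ℂ)) := by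
    refine (Complex.continuous_ofReal.tendsto _).comp ?_
    refine tendsto_integral_filter_of_dominated_convergence (fun u => M * fejK (y - u)) ?_ ?_ ?_ ?_
    · filter_upwards with ε
      have := fejK_meas
      apply Measurable.aestronglyMeasurable
      fun_prop
    · filter_upwards [self_mem_nhdsWithin] with ε hε
      filter_upwards [ae_restrict_mem measurableSet_Ioi] with u hu
      rw [norm_mul, norm_mul, Real.norm_eq_abs, Real.norm_eq_abs, Real.norm_eq_abs,
        abs_of_nonneg (fejK_nonneg _), abs_of_pos (Real.exp_pos _)]
      have h1 : Real.exp (-ε * u) ≤ 1 := by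
        rw [Real.exp_le_one_iff]
        have : 0 < ε * u := mul_pos hε hu
        linarith
      have h2 := fejK_nonneg (y - u)
      have : |b u| * Real.exp (-ε * u) ≤ M * 1 := by
        gcongr
        exact hM u
      rw [mul_one] at this
      gcongr
    · exact ((fejK_integrable.comp_sub_left y).const_mul M).integrableOn
    · filter_upwards with u
      have : Tendsto (fun ε : ℝ => b u * Real.exp (-ε * u) * fejK (y - u)) (𝓝 0)
          (𝓝 (b u * Real.exp (-0 * u) * fejK (y - u))) := by
        apply Continuous.tendsto (by fun_prop : Continuous fun ε : ℝ => b u * Real.exp (-ε * u) * fejK (y - u))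
      simp at this
      simpa using this.mono_left nhdsWithin_le_nhds
  have hR : Tendsto (fun ε : ℝ => ∫ t in (-1:ℝ)..1,
      ((1 - |t| : ℝ) : ℂ) * Complex.exp (Complex.I * t * y) * G ε t) (𝓝[>] 0)
      (𝓝 (∫ t in (-1:ℝ)..1, ((1 - |t| : ℝ) : ℂ) * Complex.exp (Complex.I * t * y) * G 0 t)) := by
    refine intervalIntegral.tendsto_integral_filter_of_dominated_convergence (fun _ => C) ?_ ?_ ?_ ?_
    · filter_upwards [self_mem_nhdsWithin] with ε hε
      have := hGc ε (le_of_lt hε)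
      apply Continuous.aestronglyMeasurable
      fun_prop
    · filter_upwards [Ioo_mem_nhdsGT (zero_lt_one (α := ℝ))] with ε hε
      filter_upwards with t ht
      rw [uIoc_of_le (by norm_num)] at ht
      have h1 : abs (1 - abs t) ≤ 1 := by
        have : |t| ≤ 1 := abs_le.mpr ⟨ht.1.le, ht.2⟩
        rw [abs_of_nonneg (by linarith)]
        linarith [abs_nonneg t]
      have h2 : (Complex.I * t * y).re = 0 := by simp
      rw [norm_mul, norm_mul, Complex.norm_real, Complex.norm_exp, h2, Real.exp_zero, mul_one,
        Real.norm_eq_abs]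
      have := hC (ε, t) ⟨⟨hε.1.le, hε.2.le⟩, ⟨ht.1.le, ht.2⟩⟩
      calc _ ≤ 1 * ‖G ε t‖ := by gcongr
        _ ≤ C := by simpa using this
    · exact intervalIntegrable_const
    · filter_upwards with t ht
      exact (hGt t).const_mul _
  refine tendsto_nhds_unique hL (hR.congr' ?_)
  filter_upwards [self_mem_nhdsWithin] with ε hε
  exact (wi_fubini hb hM h hε y).symm

lemma wi_main {b : ℝ → ℝ} (hb : Measurable b) {M : ℝ} (hM : ∀ u, |b u| ≤ M) {G : ℝ → ℝ → ℂ}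
    (hG : ContinuousOn (fun p : ℝ × ℝ => G p.1 p.2) (Ici 0 ×ˢ univ))
    (h : ∀ ε : ℝ, 0 < ε → ∀ t : ℝ, ∫ u in Ioi (0:ℝ), (b u : ℂ) * Complex.exp (-(ε + Complex.I * t) * u)
      = G ε t) :
    Tendsto (fun y => ∫ u in Ioi (0:ℝ), b u * fejK (y - u)) atTop (𝓝 0) := by
  let f : ℝ → ℂ := (Ioc (-1:ℝ) 1).indicator (fun t => ((1 - |t| : ℝ) : ℂ) * G 0 t)
  have RL := Real.tendsto_integral_exp_smul_cocompact f
  have hy : Tendsto (fun y : ℝ => -(y / (2 * π))) atTop (cocompact ℝ) := by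
    refine Tendsto.mono_right ?_ atBot_le_cocompact
    exact tendsto_neg_atTop_atBot.comp (tendsto_id.atTop_div_const (by positivity))
  have := RL.comp hy
  have h2 : Tendsto (fun y => ((∫ u in Ioi (0:ℝ), b u * fejK (y - u) : ℝ) : ℂ)) atTop (𝓝 0) := by
    refine this.congr fun y => ?_
    rw [wi_limit hb hM hG h, intervalIntegral.integral_of_le (by norm_num),
      ← integral_indicator measurableSet_Ioc]
    simp only [Function.comp]
    congr 1
    ext t
    by_cases ht : t ∈ Ioc (-1:ℝ) 1
    · simp only [f, indicator_of_mem ht]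
      rw [Circle.smul_def, Real.fourierChar_apply, smul_eq_mul]
      have : ((2 * π * -(t * -(y / (2 * π))) : ℝ) : ℂ) * Complex.I = Complex.I * t * y := by
        have : (2 * π * -(t * -(y / (2 * π))) : ℝ) = t * y := by field_simp
        rw [this]; push_cast; ring
      rw [this]; ring
    · simp only [f, indicator_of_notMem ht, smul_zero]
  have h3 := (Complex.continuous_re.tendsto _).comp h2
  simpa [Function.comp_def] using h3

/-- The normalised Chebyshev function in the exponential variable. -/
noncomputable def chebB (u : ℝ) : ℝ := Chebyshev.psi (Real.exp u) * Real.exp (-u)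

lemma chebB_nonneg (u : ℝ) : 0 ≤ chebB u :=
  mul_nonneg (Chebyshev.psi_nonneg _) (Real.exp_pos _).le

lemma chebB_le (u : ℝ) : chebB u ≤ Real.log 4 + 4 := by
  unfold chebB
  have := Chebyshev.psi_le_const_mul_self (Real.exp_pos u).le
  calc _ ≤ (Real.log 4 + 4) * Real.exp u * Real.exp (-u) := by gcongr
    _ = _ := by rw [mul_assoc, ← Real.exp_add]; simp

lemma chebB_meas : Measurable chebB := by
  unfold chebB
  have := Chebyshev.psi_mono.measurable
  fun_prop

lemma chebB_mono {u v : ℝ} (h : u ≤ v) : chebB u * Real.exp (u - v) ≤ chebB v := by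
  unfold chebB
  have h1 := Chebyshev.psi_mono (Real.exp_le_exp.mpr h)
  calc _ = Chebyshev.psi (Real.exp u) * Real.exp (-v) := by
        rw [mul_assoc, ← Real.exp_add]; ring_nf
    _ ≤ _ := by gcongr

lemma psi_laplace {s : ℂ} (hs : 1 < s.re) :
    LSeries (fun n => (ArithmeticFunction.vonMangoldt n : ℂ)) s =
      s * ∫ u in Ioi (0:ℝ), (chebB u : ℂ) * Complex.exp (-(s - 1) * u) := by
  rw [LSeries_eq_mul_integral_of_nonneg (fun n => ArithmeticFunction.vonMangoldt n) zero_le_one hs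
    ?_ (fun n => ArithmeticFunction.vonMangoldt_nonneg)]
  · congr 1
    rw [← Real.exp_zero, ← integral_comp_exp_Ioi]
    refine setIntegral_congr_fun measurableSet_Ioi fun u _ => ?_
    simp only [chebB, Chebyshev.psi]
    have h1 : ((Real.exp u : ℝ) : ℂ) ^ (-(s + 1)) = Complex.exp (-(s + 1) * u) := by
      rw [Complex.cpow_def_of_ne_zero (by exact_mod_cast (Real.exp_pos u).ne'),
        ← Complex.ofReal_log (Real.exp_pos u).le, Real.log_exp]
      ring_nf
    rw [h1, Complex.real_smul]
    have h2 : Complex.exp u * Complex.exp (-(s + 1) * u)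
        = Complex.exp (-u) * Complex.exp (-(s - 1) * u) := by
      rw [← Complex.exp_add, ← Complex.exp_add]; congr 1; ring
    have h3 : Finset.Icc 1 ⌊Real.exp u⌋₊ = Finset.Ioc 0 ⌊Real.exp u⌋₊ := by
      ext; simp [Nat.succ_le_iff]
    rw [h3]
    push_cast
    linear_combination (∑ k ∈ Finset.Ioc 0 ⌊Real.exp u⌋₊, (ArithmeticFunction.vonMangoldt k : ℂ)) * h2
  · refine Asymptotics.IsBigO.of_bound (Real.log 4 + 4) ?_
    filter_upwards with n
    have h3 : Finset.Icc 1 n = Finset.Ioc 0 ⌊(n : ℝ)⌋₊ := by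
      ext; simp [Nat.succ_le_iff]
    rw [h3, Real.rpow_one, Real.norm_eq_abs, Real.norm_eq_abs, abs_of_nonneg (Nat.cast_nonneg n : (0:ℝ) ≤ n)]
    have := Chebyshev.psi_le_const_mul_self (Nat.cast_nonneg n : (0:ℝ) ≤ n)
    have h4 := Chebyshev.psi_nonneg (n : ℝ)
    unfold Chebyshev.psi at this h4
    rwa [abs_of_nonneg h4]

lemma chebB_int {z : ℂ} (hz : 0 < z.re) :
    IntegrableOn (fun u : ℝ => (chebB u : ℂ) * Complex.exp (-z * u)) (Ioi 0) := by
  have h1 : IntegrableOn (fun u : ℝ => (Real.log 4 + 4) * Real.exp (-z.re * u)) (Ioi 0) :=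
    (integrableOn_exp_mul_Ioi (by linarith) 0).const_mul _
  refine h1.mono' ?_ ?_
  · apply Measurable.aestronglyMeasurable
    have := chebB_meas
    fun_prop
  · filter_upwards with u
    rw [norm_mul, Complex.norm_real, Complex.norm_exp, Real.norm_eq_abs,
      abs_of_nonneg (chebB_nonneg u)]
    have : (-z * u).re = -z.re * u := by simp
    rw [this]
    gcongr
    exact chebB_le u

lemma exists_g : ∃ g : ℂ → ℂ, ContinuousOn g {s | 1 ≤ s.re} ∧ ∀ s : ℂ, 1 < s.re →
    ∫ u in Ioi (0:ℝ), ((chebB u - 1 : ℝ) : ℂ) * Complex.exp (-(s - 1) * u) = g s := by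
  classical
  let F := ArithmeticFunction.vonMangoldt.LFunctionResidueClassAux (q := 1) 1
  have hF : ContinuousOn F {s | 1 ≤ s.re} :=
    ArithmeticFunction.vonMangoldt.continuousOn_LFunctionResidueClassAux (q := 1) 1
  refine ⟨fun s => (F s - 1) / s, ?_, ?_⟩
  · refine (hF.sub continuousOn_const).div continuousOn_id ?_
    intro s hs h0
    rw [h0] at hs
    have h5 : (1:ℝ) ≤ (0:ℂ).re := hs
    simp at h5
    linarith
  · intro s hs
    have h1 := ArithmeticFunction.vonMangoldt.eqOn_LFunctionResidueClassAux (q := 1) (a := 1)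
      isUnit_one hs
    have h2 : (fun n => ((ArithmeticFunction.vonMangoldt.residueClass (q := 1) 1 n : ℝ) : ℂ))
        = fun n => (ArithmeticFunction.vonMangoldt n : ℂ) := by
      ext n
      have : (n : ZMod 1) = 1 := Subsingleton.elim _ _
      simp [ArithmeticFunction.vonMangoldt.residueClass, indicator, this]
    have h1' : F s = LSeries (fun n => (ArithmeticFunction.vonMangoldt n : ℂ)) s - 1 / (s - 1) := by
      rw [← h2]
      simpa using h1
    rw [psi_laplace hs] at h1'
    have hz : 0 < (s - 1).re := by simpa using hs
    have hs0 : s ≠ 0 := by rintro rfl; simp at hs; linarith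
    have hs1 : s - 1 ≠ 0 := by intro h; rw [h] at hz; simp at hz
    have h3 : ∫ u in Ioi (0:ℝ), Complex.exp (-(s - 1) * u) = 1 / (s - 1) := by
      rw [integral_exp_mul_complex_Ioi (by rw [Complex.neg_re]; linarith) 0]
      simp only [Complex.ofReal_zero, mul_zero, Complex.exp_zero]
      field_simp
    have h4 : ∫ u in Ioi (0:ℝ), ((chebB u - 1 : ℝ) : ℂ) * Complex.exp (-(s - 1) * u) =
        (∫ u in Ioi (0:ℝ), (chebB u : ℂ) * Complex.exp (-(s - 1) * u)) - 1 / (s - 1) := by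
      rw [← h3, ← integral_sub (chebB_int hz)
        (integrableOn_exp_mul_complex_Ioi (by rw [Complex.neg_re]; linarith) 0)]
      congr 1
      ext u
      push_cast
      ring
    change _ = (F s - 1) / s
    rw [h4, h1']
    field_simp
    ring

lemma chebB_conv {η : ℝ} (hη : 0 < η) :
    Tendsto (fun y => ∫ u in Ioi (0:ℝ), (chebB (η * u) - 1) * fejK (y - u)) atTop (𝓝 0) := by
  obtain ⟨g, hg, hgs⟩ := exists_g
  refine wi_main (b := fun u => chebB (η * u) - 1) (M := Real.log 4 + 4 + 1)
    (G := fun ε t => η⁻¹ * g (1 + (ε + Complex.I * t) / η)) ?_ ?_ ?_ ?_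
  · have := chebB_meas
    fun_prop
  · intro u
    have h1 := chebB_nonneg (η * u)
    have h2 := chebB_le (η * u)
    have h3 : 0 < Real.log 4 := Real.log_pos (by norm_num)
    rw [abs_le]; constructor <;> linarith
  · refine continuousOn_const.mul (hg.comp (by fun_prop) ?_)
    intro p hp
    have : 0 ≤ p.1 := hp.1
    have h2 : ((p.1 + Complex.I * p.2) / η : ℂ).re = p.1 / η := by
      rw [Complex.div_ofReal_re]; simp
    simp only [mem_ofPred_eq, Complex.add_re, h2, Complex.one_re]
    have : 0 ≤ p.1 / η := by positivity
    linarith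
  · intro ε hε t
    have h2 : ((ε + Complex.I * t) / η : ℂ).re = ε / η := by
      rw [Complex.div_ofReal_re]; simp
    rw [← hgs _ (by rw [Complex.add_re, h2, Complex.one_re]; linarith [div_pos hε hη])]
    have := integral_comp_mul_left_Ioi (fun u : ℝ => ((chebB u - 1 : ℝ) : ℂ) *
      Complex.exp (-(1 + (ε + Complex.I * t) / η - 1) * u)) 0 hη
    rw [mul_zero, Complex.real_smul] at this
    push_cast at this ⊢
    rw [← this]
    congr 1
    ext u
    have hη' : (η : ℂ) ≠ 0 := by exact_mod_cast hη.ne'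
    congr 2
    field_simp
    ring

lemma chebB_zero {u : ℝ} (hu : u ≤ 0) : chebB u = 0 := by
  unfold chebB
  rw [Chebyshev.psi_eq_zero_of_le_one (Real.exp_le_one_iff.mpr hu), zero_mul]

lemma chebB_fejK_int {f : ℝ → ℝ} (hf : Measurable f) :
    Integrable (fun v => chebB (f v) * fejK v) := by
  refine (fejK_integrable.const_mul (Real.log 4 + 4)).mono' ?_ ?_
  · have := chebB_meas
    have := fejK_meas
    apply Measurable.aestronglyMeasurable
    fun_prop
  · filter_upwards with v
    rw [norm_mul, Real.norm_eq_abs, Real.norm_eq_abs, abs_of_nonneg (chebB_nonneg _),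
      abs_of_nonneg (fejK_nonneg v)]
    have := fejK_nonneg v
    gcongr
    exact chebB_le _

lemma fejK_half : Tendsto (fun y => ∫ u in Ioi (0:ℝ), fejK (y - u)) atTop (𝓝 (∫ v, fejK v)) := by
  have h1 : ∀ y, ∫ u in Ioi (0:ℝ), fejK (y - u) = ∫ v, (Iio y).indicator fejK v := by
    intro y
    rw [← integral_indicator measurableSet_Ioi, ← integral_sub_left_eq_self _ volume y]
    congr 1
    ext v
    by_cases hv : v < y
    · rw [indicator_of_mem (by simpa using hv), indicator_of_mem (by simpa using hv)]; simp
    · rw [indicator_of_notMem (by simpa using hv), indicator_of_notMem (by simpa using hv)]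
  simp_rw [h1]
  refine tendsto_integral_filter_of_dominated_convergence fejK ?_ ?_ fejK_integrable ?_
  · filter_upwards with y
    exact (fejK_meas.indicator measurableSet_Iio).aestronglyMeasurable
  · filter_upwards with y
    filter_upwards with v
    refine (norm_indicator_le_norm_self _ _).trans ?_
    rw [Real.norm_eq_abs, abs_of_nonneg (fejK_nonneg v)]
  · filter_upwards with v
    refine tendsto_const_nhds.congr' ?_
    filter_upwards [eventually_gt_atTop v] with y hy
    rw [indicator_of_mem (by simpa using hy)]

lemma chebB_conv' {η : ℝ} (hη : 0 < η) :
    Tendsto (fun y => ∫ v, chebB (η * (y - v)) * fejK v) atTop (𝓝 (∫ v, fejK v)) := by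
  have h := (chebB_conv hη).add fejK_half
  rw [zero_add] at h
  refine h.congr fun y => ?_
  have hi1 : Integrable (fun u => chebB (η * u) * fejK (y - u)) := by
    have := (chebB_fejK_int (f := fun v => η * (y - v)) (by fun_prop)).comp_sub_left y
    simpa using this
  have hi2 : Integrable (fun u => fejK (y - u)) := fejK_integrable.comp_sub_left y
  rw [← integral_add _ hi2.integrableOn]
  · have e1 : ∀ u, (chebB (η * u) - 1) * fejK (y - u) + fejK (y - u)
        = chebB (η * u) * fejK (y - u) := fun u => by ring
    simp_rw [e1]
    rw [setIntegral_eq_integral_of_forall_compl_eq_zero]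
    · rw [← integral_sub_left_eq_self _ volume y]
      simp
    · intro u hu
      have : u ≤ 0 := by simpa using hu
      rw [chebB_zero (mul_nonpos_of_nonneg_of_nonpos hη.le this), zero_mul]
  · have := (hi1.sub hi2).integrableOn (s := Ioi (0:ℝ))
    refine this.congr_fun (fun u _ => ?_) measurableSet_Ioi
    simp only [Pi.sub_apply]
    ring

lemma chebB_upper {η R : ℝ} (hη : 0 < η) (y : ℝ) :
    chebB (η * y) * Real.exp (-(2 * η * R)) * (∫ v in Icc (-R) R, fejK v)
      ≤ ∫ v, chebB (η * (y + R - v)) * fejK v := by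
  have hi := chebB_fejK_int (f := fun v => η * (y + R - v)) (by fun_prop)
  calc _ = ∫ v in Icc (-R) R, chebB (η * y) * Real.exp (-(2 * η * R)) * fejK v := by
        rw [integral_const_mul]
    _ ≤ ∫ v in Icc (-R) R, chebB (η * (y + R - v)) * fejK v := by
        refine setIntegral_mono_on (fejK_integrable.const_mul _).integrableOn hi.integrableOn
          measurableSet_Icc fun v hv => ?_
        refine mul_le_mul_of_nonneg_right ?_ (fejK_nonneg v)
        have h1 : η * y ≤ η * (y + R - v) := by
          apply mul_le_mul_of_nonneg_left _ hη.le
          linarith [hv.2]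
        refine le_trans ?_ (chebB_mono h1)
        refine mul_le_mul_of_nonneg_left ?_ (chebB_nonneg _)
        rw [Real.exp_le_exp]
        nlinarith [hv.1]
    _ ≤ _ := setIntegral_le_integral hi (by
        filter_upwards with v
        exact mul_nonneg (chebB_nonneg _) (fejK_nonneg v))

lemma chebB_lower {η R : ℝ} (hη : 0 < η) (y : ℝ) :
    ∫ v, chebB (η * (y - R - v)) * fejK v ≤
      chebB (η * y) * Real.exp (2 * η * R) * (∫ v, fejK v)
        + (Real.log 4 + 4) * ((∫ v, fejK v) - ∫ v in Icc (-R) R, fejK v) := by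
  have hi := chebB_fejK_int (f := fun v => η * (y - R - v)) (by fun_prop)
  have hsplit : (∫ v, fejK v) - ∫ v in Icc (-R) R, fejK v = ∫ v in (Icc (-R) R)ᶜ, fejK v := by
    rw [← integral_add_compl measurableSet_Icc fejK_integrable]; ring
  rw [hsplit, ← integral_add_compl (measurableSet_Icc (a := -R) (b := R)) hi]
  refine add_le_add ?_ ?_
  · calc _ ≤ ∫ v in Icc (-R) R, chebB (η * y) * Real.exp (2 * η * R) * fejK v := by
          refine setIntegral_mono_on hi.integrableOn (fejK_integrable.const_mul _).integrableOn
            measurableSet_Icc fun v hv => ?_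
          refine mul_le_mul_of_nonneg_right ?_ (fejK_nonneg v)
          have h1 : η * (y - R - v) ≤ η * y := by
            apply mul_le_mul_of_nonneg_left _ hη.le
            linarith [hv.1]
          have h2 := chebB_mono h1
          calc chebB (η * (y - R - v)) = chebB (η * (y - R - v)) *
                Real.exp (η * (y - R - v) - η * y) * Real.exp (η * (R + v)) := by
                rw [mul_assoc, ← Real.exp_add]; ring_nf; simp
            _ ≤ chebB (η * y) * Real.exp (2 * η * R) := by
                refine mul_le_mul h2 ?_ (Real.exp_pos _).le (chebB_nonneg _)
                rw [Real.exp_le_exp]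
                nlinarith [hv.2]
      _ ≤ ∫ v, chebB (η * y) * Real.exp (2 * η * R) * fejK v :=
          setIntegral_le_integral (fejK_integrable.const_mul _) (by
            filter_upwards with v
            exact mul_nonneg (mul_nonneg (chebB_nonneg _) (Real.exp_pos _).le) (fejK_nonneg v))
      _ = _ := by rw [integral_const_mul]
  · rw [← integral_const_mul]
    refine setIntegral_mono_on hi.integrableOn (fejK_integrable.const_mul _).integrableOn
      measurableSet_Icc.compl fun v hv => ?_
    exact mul_le_mul_of_nonneg_right (chebB_le _) (fejK_nonneg v)

lemma fejK_Icc : Tendsto (fun R : ℝ => ∫ v in Icc (-R) R, fejK v) atTop (𝓝 (∫ v, fejK v)) := by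
  have h := intervalIntegral_tendsto_integral (μ := volume) fejK_integrable
    tendsto_neg_atTop_atBot (tendsto_id (α := ℝ) (x := atTop))
  refine h.congr' ?_
  filter_upwards [eventually_ge_atTop 0] with R hR
  rw [id, intervalIntegral.integral_of_le (by linarith), integral_Icc_eq_integral_Ioc]

lemma chebB_bounds {e : ℝ} (he : 0 < e) (he1 : e < 1) :
    ∀ᶠ x in atTop, chebB x ≤ (1 + e) ^ 2 / (1 - e) ∧
      (1 - e - (Real.log 4 + 4) * e) / (1 + e) ≤ chebB x := by
  set c := ∫ v, fejK v with hc
  have hc0 : 0 < c := fejK_integral_pos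
  obtain ⟨R, hR1, hR⟩ := ((fejK_Icc.eventually (lt_mem_nhds
    (show c * (1 - e) < c by nlinarith))).and (eventually_gt_atTop 0)).exists
  have hlog : 0 < Real.log (1 + e) := Real.log_pos (by linarith)
  set η := Real.log (1 + e) / (2 * R) with hηd
  have hη : 0 < η := by positivity
  have hexp : Real.exp (2 * η * R) = 1 + e := by
    rw [hηd, show 2 * (Real.log (1 + e) / (2 * R)) * R = Real.log (1 + e) by field_simp,
      Real.exp_log (by linarith)]
  have hx : Tendsto (fun x : ℝ => x / η) atTop atTop := tendsto_id.atTop_div_const hη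
  have hU := ((chebB_conv' hη).comp ((tendsto_atTop_add_const_right _ R hx))).eventually
    (gt_mem_nhds (show c < c * (1 + e) by nlinarith))
  have hL := ((chebB_conv' hη).comp ((tendsto_atTop_add_const_right _ (-R) hx))).eventually
    (lt_mem_nhds (show c * (1 - e) < c by nlinarith))
  filter_upwards [hU, hL] with x h1 h2
  have hxx : η * (x / η) = x := by field_simp
  have h3 := chebB_upper (R := R) hη (x / η)
  have h4 := chebB_lower (R := R) hη (x / η)
  simp only [Function.comp, ← sub_eq_add_neg] at h1 h2
  rw [hxx] at h3 h4
  rw [Real.exp_neg, hexp] at h3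
  rw [hexp] at h4
  have hB := chebB_nonneg x
  set I := ∫ v in Icc (-R) R, fejK v with hI
  constructor
  · rw [le_div_iff₀ (by linarith)]
    have h5 : chebB x * (1 + e)⁻¹ * (c * (1 - e)) ≤ c * (1 + e) := by
      refine le_trans ?_ (h3.trans h1.le)
      gcongr
    have h6 : chebB x * (1 - e) * c ≤ (1 + e) ^ 2 * c := by
      have h7 : chebB x * (1 - e) * c = (1 + e) * (chebB x * (1 + e)⁻¹ * (c * (1 - e))) := by
        field_simp
      rw [h7]
      calc _ ≤ (1 + e) * (c * (1 + e)) := by gcongr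
        _ = _ := by ring
    exact le_of_mul_le_mul_right h6 hc0
  · rw [div_le_iff₀ (by linarith)]
    have hl4 : 0 < Real.log 4 := Real.log_pos (by norm_num)
    have h5 : (Real.log 4 + 4) * (c - I) ≤ (Real.log 4 + 4) * (c * e) := by
      gcongr
      linarith
    have h6 : (1 - e - (Real.log 4 + 4) * e) * c ≤ chebB x * (1 + e) * c := by
      linarith
    exact le_of_mul_le_mul_right h6 hc0

lemma chebB_tendsto : Tendsto chebB atTop (𝓝 1) := by
  rw [tendsto_order]
  have hu : Tendsto (fun e : ℝ => (1 + e) ^ 2 / (1 - e)) (𝓝[>] 0) (𝓝 1) := by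
    have : ContinuousAt (fun e : ℝ => (1 + e) ^ 2 / (1 - e)) 0 := by
      apply ContinuousAt.div (by fun_prop) (by fun_prop) (by simp)
    have h := this.tendsto
    simp at h
    exact h.mono_left nhdsWithin_le_nhds
  have hl : Tendsto (fun e : ℝ => (1 - e - (Real.log 4 + 4) * e) / (1 + e)) (𝓝[>] 0) (𝓝 1) := by
    have : ContinuousAt (fun e : ℝ => (1 - e - (Real.log 4 + 4) * e) / (1 + e)) 0 := by
      apply ContinuousAt.div (by fun_prop) (by fun_prop) (by simp)
    have h := this.tendsto
    simp at h
    exact h.mono_left nhdsWithin_le_nhds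
  have hs : ∀ᶠ e : ℝ in 𝓝[>] 0, e ∈ Ioo (0:ℝ) 1 := Ioo_mem_nhdsGT zero_lt_one
  constructor
  · intro a ha
    obtain ⟨e, he, h2⟩ := (hs.and (hl.eventually (lt_mem_nhds ha))).exists
    filter_upwards [chebB_bounds he.1 he.2] with x hx
    exact h2.trans_le hx.2
  · intro a ha
    obtain ⟨e, he, h2⟩ := (hs.and (hu.eventually (gt_mem_nhds ha))).exists
    filter_upwards [chebB_bounds he.1 he.2] with x hx
    exact hx.1.trans_lt h2

lemma psi_tendsto : Tendsto (fun x : ℝ => Chebyshev.psi x / x) atTop (𝓝 1) := by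
  refine (chebB_tendsto.comp Real.tendsto_log_atTop).congr' ?_
  filter_upwards [eventually_gt_atTop 0] with x hx
  simp only [Function.comp, chebB]
  rw [Real.exp_neg, Real.exp_log hx, div_eq_mul_inv]

lemma theta_tendsto : Tendsto (fun x : ℝ => Chebyshev.theta x / x) atTop (𝓝 1) := by
  obtain ⟨C, hC⟩ := Chebyshev.psi_sub_theta_le_mul_sqrt
  have h0 : Tendsto (fun x : ℝ => (Chebyshev.psi x - Chebyshev.theta x) / x) atTop (𝓝 0) := by
    have h1 : Tendsto (fun x : ℝ => C * (√x)⁻¹) atTop (𝓝 0) := by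
      have := (tendsto_inv_atTop_zero.comp tendsto_sqrt_atTop).const_mul C
      simpa using this
    refine tendsto_of_tendsto_of_tendsto_of_le_of_le' tendsto_const_nhds h1 ?_ ?_
    · filter_upwards [eventually_gt_atTop 0] with x hx
      have := Chebyshev.theta_le_psi x
      exact div_nonneg (by linarith) hx.le
    · filter_upwards [eventually_gt_atTop 0] with x hx
      rw [div_le_iff₀ hx, mul_assoc]
      have := Real.sqrt_pos.mpr hx
      have h2 : (√x)⁻¹ * x = √x := by
        rw [inv_mul_eq_iff_eq_mul₀ this.ne', Real.mul_self_sqrt hx.le]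
      rw [h2]
      exact hC x
  have := psi_tendsto.sub h0
  rw [sub_zero] at this
  refine this.congr fun x => ?_
  ring

noncomputable def primeT (x : ℝ) : ℝ :=
  ∑ p ∈ Finset.filter Nat.Prime (Finset.range (⌊x⌋₊ + 1)), Real.log p / Real.sqrt p

lemma sqrt_rpow_neg {t : ℝ} (ht : 0 ≤ t) : t ^ (-(1/2) : ℝ) = 1 / Real.sqrt t := by
  rw [Real.rpow_neg ht, Real.sqrt_eq_rpow, one_div (_ ^ _)]

lemma primeT_abel {x : ℝ} (hx : 1 ≤ x) :
    primeT x = Chebyshev.theta x / Real.sqrt x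
      + ∫ t in (0:ℝ)..x, (1/2) * t ^ (-(3/2) : ℝ) * Chebyshev.theta t := by
  have hd : ∀ t ∈ Icc (1:ℝ) x, HasDerivAt (fun t : ℝ => t ^ (-(1/2) : ℝ))
      (-(1/2) * t ^ (-(3/2) : ℝ)) t := by
    intro t ht
    have := Real.hasDerivAt_rpow_const (x := t) (p := (-(1/2) : ℝ)) (Or.inl (by linarith [ht.1]))
    rwa [show (-(1/2) : ℝ) - 1 = -(3/2) by norm_num] at this
  have hth : ∀ t : ℝ, ∑ k ∈ Finset.Icc 0 ⌊t⌋₊, (if k.Prime then Real.log k else 0)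
      = Chebyshev.theta t := by
    intro t
    rw [Chebyshev.theta_eq_sum_Icc, Finset.sum_filter]
  have hab := sum_mul_eq_sub_integral_mul₀ (𝕜 := ℝ) (f := fun t : ℝ => t ^ (-(1/2) : ℝ))
    (fun k => if k.Prime then Real.log k else 0) (by simp) x
    (fun t ht => (hd t ht).differentiableAt) ?_
  · have h1 : primeT x = ∑ k ∈ Finset.Icc 0 ⌊x⌋₊, (k : ℝ) ^ (-(1/2) : ℝ) *
        (if k.Prime then Real.log k else 0) := by
      unfold primeT
      rw [Finset.sum_filter]
      have : Finset.range (⌊x⌋₊ + 1) = Finset.Icc 0 ⌊x⌋₊ := by ext; simp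
      rw [this]
      refine Finset.sum_congr rfl fun k _ => ?_
      rw [sqrt_rpow_neg (by positivity)]
      split_ifs
      · ring
      · simp
    rw [h1, hab, hth, sqrt_rpow_neg (by linarith)]
    have h2 : ∫ t in Ioc 1 x, deriv (fun t : ℝ => t ^ (-(1/2) : ℝ)) t *
        ∑ k ∈ Finset.Icc 0 ⌊t⌋₊, (if k.Prime then Real.log k else 0)
        = - ∫ t in Ioc 1 x, (1/2) * t ^ (-(3/2) : ℝ) * Chebyshev.theta t := by
      rw [← integral_neg]
      refine setIntegral_congr_fun measurableSet_Ioc fun t ht => ?_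
      rw [hth, (hd t ⟨ht.1.le, ht.2⟩).deriv]
      ring
    rw [h2, intervalIntegral.integral_of_le (by linarith)]
    have h3 : ∫ t in Ioc 0 x, (1/2) * t ^ (-(3/2) : ℝ) * Chebyshev.theta t
        = ∫ t in Ioc 1 x, (1/2) * t ^ (-(3/2) : ℝ) * Chebyshev.theta t := by
      refine setIntegral_eq_of_subset_of_forall_sdiff_eq_zero measurableSet_Ioc
        (Ioc_subset_Ioc_left (by norm_num)) fun t ht => ?_
      have : t ≤ 1 := by
        by_contra h
        exact ht.2 ⟨not_le.mp h, ht.1.2⟩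
      have h0 : Chebyshev.theta t = 0 := Chebyshev.theta_eq_zero_of_lt_two (by linarith)
      rw [h0, mul_zero]
    rw [h3]
    ring
  · refine IntegrableOn.congr_fun (f := fun t : ℝ => (-(1/2) * t ^ (-(3/2) : ℝ)))
      (ContinuousOn.integrableOn_Icc ?_) (fun t ht => (hd t ht).deriv.symm) measurableSet_Icc
    refine continuousOn_const.mul (continuousOn_id.rpow_const fun t ht => Or.inl ?_)
    have := ht.1
    simp only [id]; linarith

lemma primeT_int_scale {x : ℝ} (hx : 0 < x) :
    (∫ t in (0:ℝ)..x, (1/2) * t ^ (-(3/2) : ℝ) * Chebyshev.theta t) / Real.sqrt x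
      = ∫ s in (0:ℝ)..1, (1/2) * s ^ (-(1/2) : ℝ) * (Chebyshev.theta (x * s) / (x * s)) := by
  have h := intervalIntegral.integral_comp_mul_left (a := 0) (b := 1)
    (fun t => (1/2) * t ^ (-(3/2) : ℝ) * Chebyshev.theta t) hx.ne'
  rw [mul_zero, mul_one, smul_eq_mul] at h
  have h2 : ∫ s in (0:ℝ)..1, (1/2) * s ^ (-(1/2) : ℝ) * (Chebyshev.theta (x * s) / (x * s))
      = ∫ s in (0:ℝ)..1, Real.sqrt x *
        (1 / x * x) * ((1/2) * (x * s) ^ (-(3/2) : ℝ) * Chebyshev.theta (x * s)) := by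
    rw [intervalIntegral.integral_of_le (by norm_num), intervalIntegral.integral_of_le (by norm_num)]
    refine setIntegral_congr_fun measurableSet_Ioc fun s hs => ?_
    have hs0 := hs.1
    have e1 : (x * s) ^ (-(3/2) : ℝ) = 1 / Real.sqrt x * s ^ (-(1/2) : ℝ) * (x * s)⁻¹ := by
      rw [← sqrt_rpow_neg hx.le, ← Real.mul_rpow hx.le hs0.le, ← Real.rpow_neg_one,
        ← Real.rpow_add (by positivity)]
      norm_num
    rw [e1]
    have := Real.sqrt_pos.mpr hx
    field_simp
  rw [h2, intervalIntegral.integral_const_mul, h]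
  have h3 := Real.sqrt_pos.mpr hx
  field_simp
  rw [Real.sq_sqrt hx.le]

lemma primeT_int_tendsto :
    Tendsto (fun x : ℝ => ∫ s in (0:ℝ)..1,
      (1/2) * s ^ (-(1/2) : ℝ) * (Chebyshev.theta (x * s) / (x * s))) atTop (𝓝 1) := by
  have hone : ∫ s in (0:ℝ)..1, (1/2) * s ^ (-(1/2) : ℝ) * 1 = 1 := by
    simp only [mul_one]
    rw [intervalIntegral.integral_const_mul, integral_rpow (Or.inl (by norm_num))]
    norm_num
  suffices h : Tendsto (fun x : ℝ => ∫ s in (0:ℝ)..1,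
      (1/2) * s ^ (-(1/2) : ℝ) * (Chebyshev.theta (x * s) / (x * s))) atTop
      (𝓝 (∫ s in (0:ℝ)..1, (1/2) * s ^ (-(1/2) : ℝ) * 1)) by rwa [hone] at h
  refine intervalIntegral.tendsto_integral_filter_of_dominated_convergence
    (fun s => (1/2) * s ^ (-(1/2) : ℝ) * Real.log 4) ?_ ?_ ?_ ?_
  · refine Eventually.of_forall fun x => Measurable.aestronglyMeasurable ?_
    have : Measurable Chebyshev.theta := Chebyshev.theta_mono.measurable
    fun_prop
  · filter_upwards [eventually_gt_atTop 0] with x hx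
    refine ae_of_all _ fun s hs => ?_
    rw [uIoc_of_le (by norm_num)] at hs
    have hs0 := hs.1
    have h1 := Chebyshev.theta_le_log4_mul_x (x := x * s) (by positivity)
    have h2 := Chebyshev.theta_nonneg (x * s)
    rw [Real.norm_of_nonneg (by positivity)]
    gcongr
    rwa [div_le_iff₀ (by positivity)]
  · exact ((intervalIntegral.intervalIntegrable_rpow' (by norm_num)).const_mul _).mul_const _
  · refine ae_of_all _ fun s hs => ?_
    rw [uIoc_of_le (by norm_num)] at hs
    refine Tendsto.const_mul _ ?_
    exact theta_tendsto.comp (tendsto_id.atTop_mul_const hs.1)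

lemma primeT_tendsto : Tendsto (fun x : ℝ => primeT x / (2 * Real.sqrt x)) atTop (𝓝 1) := by
  have h := (theta_tendsto.add primeT_int_tendsto).div_const 2
  norm_num at h
  refine h.congr' ?_
  filter_upwards [eventually_ge_atTop 1] with x hx
  have hx0 : 0 < x := by linarith
  have h3 := Real.sqrt_pos.mpr hx0
  have h4 := primeT_int_scale hx0
  norm_num at h4
  rw [primeT_abel hx, ← h4]
  have h5 : Chebyshev.theta x / x = Chebyshev.theta x / Real.sqrt x / Real.sqrt x := by
    rw [div_div, Real.mul_self_sqrt hx0.le]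
  rw [h5]
  norm_num
  field_simp

noncomputable def primeS (x : ℝ) : ℝ :=
  ∑ p ∈ Finset.filter Nat.Prime (Finset.range (⌊x⌋₊ + 1)), 1 / Real.sqrt p

lemma primeT_le {x : ℝ} (hx : 1 ≤ x) : primeT x ≤ primeS x * Real.log x := by
  unfold primeT primeS
  rw [Finset.sum_mul]
  refine Finset.sum_le_sum fun p hp => ?_
  rw [Finset.mem_filter, Finset.mem_range] at hp
  have hpx : (p : ℝ) ≤ x := (Nat.le_floor_iff (by linarith)).mp (by omega)
  have hp0 : (0:ℝ) < p := by exact_mod_cast hp.2.pos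
  have := Real.log_le_log hp0 hpx
  rw [div_mul_eq_mul_div, one_mul]
  gcongr

lemma sum_inv_sqrt_le (n : ℕ) :
    ∑ k ∈ Finset.range (n + 1), 1 / Real.sqrt k ≤ 2 * Real.sqrt n := by
  induction n with
  | zero => simp
  | succ n ih =>
    rw [Finset.sum_range_succ]
    have h1 : 0 < Real.sqrt ((n + 1 : ℕ) : ℝ) := Real.sqrt_pos.mpr (by positivity)
    have h2 : Real.sqrt ((n + 1 : ℕ) : ℝ) ^ 2 = n + 1 := by
      rw [Real.sq_sqrt (by positivity)]; push_cast; rfl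
    have h3 : Real.sqrt (n : ℝ) ^ 2 = n := Real.sq_sqrt (by positivity)
    have h4 : 1 / Real.sqrt ((n + 1 : ℕ) : ℝ) ≤
        2 * Real.sqrt ((n + 1 : ℕ) : ℝ) - 2 * Real.sqrt (n : ℝ) := by
      rw [div_le_iff₀ h1]
      nlinarith [sq_nonneg (Real.sqrt ((n + 1 : ℕ) : ℝ) - Real.sqrt (n : ℝ))]
    linarith

lemma primeS_le {x δ : ℝ} (hx : 1 < x) (h0 : 0 < δ) (h1 : δ < 1) :
    primeS x ≤ 2 * Real.sqrt (x ^ (1 - δ)) + primeT x / ((1 - δ) * Real.log x) := by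
  have hx0 : 0 < x := by linarith
  set z := x ^ (1 - δ) with hz
  have hz0 : 0 < z := by positivity
  have hlx := Real.log_pos hx
  have hlz : Real.log z = (1 - δ) * Real.log x := Real.log_rpow hx0 _
  have hlz0 : 0 < Real.log z := by rw [hlz]; exact mul_pos (by linarith) hlx
  rw [← hlz]
  have hA : ∑ p ∈ Finset.filter Nat.Prime (Finset.range (⌊x⌋₊ + 1)),
      (if (p:ℝ) ≤ z then 1 / Real.sqrt p else 0) ≤ 2 * Real.sqrt z := by
    rw [← Finset.sum_filter]
    calc _ ≤ ∑ k ∈ Finset.range (⌊z⌋₊ + 1), 1 / Real.sqrt k := by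
          refine Finset.sum_le_sum_of_subset_of_nonneg ?_ fun _ _ _ => by positivity
          intro p hp
          rw [Finset.mem_filter] at hp
          have := (Nat.le_floor_iff hz0.le).mpr hp.2
          rw [Finset.mem_range]; omega
      _ ≤ 2 * Real.sqrt (⌊z⌋₊ : ℝ) := sum_inv_sqrt_le _
      _ ≤ _ := by
          gcongr
          exact Nat.floor_le hz0.le
  refine le_trans ?_ (add_le_add_left hA _)
  unfold primeS primeT
  rw [Finset.sum_div, ← Finset.sum_add_distrib]
  refine Finset.sum_le_sum fun p hp => ?_
  rw [Finset.mem_filter] at hp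
  have hp1 : (1:ℝ) ≤ p := by exact_mod_cast hp.2.one_lt.le
  have hlp := Real.log_nonneg hp1
  split_ifs with h
  · have : 0 ≤ Real.log p / Real.sqrt p / Real.log z := by positivity
    linarith
  · have h5 := Real.log_le_log hz0 (not_le.mp h).le
    have h6 : 0 < Real.sqrt (p : ℝ) := Real.sqrt_pos.mpr (by linarith)
    rw [zero_add, div_div, div_le_div_iff₀ h6 (by positivity)]
    nlinarith

lemma primeS_tendsto :
    Tendsto (fun x : ℝ => primeS x * Real.log x / (2 * Real.sqrt x)) atTop (𝓝 1) := by
  rw [tendsto_order]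
  constructor
  · intro a ha
    filter_upwards [primeT_tendsto.eventually (lt_mem_nhds ha), eventually_gt_atTop 1] with x h1 h2
    refine h1.trans_le ?_
    have := primeT_le h2.le
    gcongr
  · intro b hb
    obtain ⟨δ, h0, h1, hδ⟩ : ∃ δ : ℝ, 0 < δ ∧ δ < 1 ∧ 1 / (1 - δ) < b := by
      refine ⟨(b - 1) / (2 * b), by apply div_pos <;> linarith, ?_, ?_⟩
      · rw [div_lt_one (by linarith)]; linarith
      · have : 1 - (b - 1) / (2 * b) = (b + 1) / (2 * b) := by field_simp; ring
        rw [this, one_div_div, div_lt_iff₀ (by linarith)]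
        nlinarith
    have hlim : Tendsto (fun x : ℝ => Real.log x / x ^ (δ / 2)
        + primeT x / (2 * Real.sqrt x) / (1 - δ)) atTop (𝓝 (0 + 1 / (1 - δ))) :=
      ((isLittleO_log_rpow_atTop (by positivity)).tendsto_div_nhds_zero).add
        (primeT_tendsto.div_const _)
    rw [zero_add] at hlim
    filter_upwards [hlim.eventually (gt_mem_nhds hδ), eventually_gt_atTop 1] with x h3 h4
    refine lt_of_le_of_lt ?_ h3
    have hx0 : 0 < x := by linarith
    have hs := Real.sqrt_pos.mpr hx0
    have hl := Real.log_pos h4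
    have h5 : Real.sqrt (x ^ (1 - δ)) = Real.sqrt x / x ^ (δ / 2) := by
      rw [Real.sqrt_eq_rpow, Real.sqrt_eq_rpow, ← Real.rpow_mul hx0.le, ← Real.rpow_sub hx0]
      congr 1; ring
    have h6 := primeS_le h4 h0 h1
    rw [h5] at h6
    have h7 : 0 < x ^ (δ / 2) := by positivity
    have h8 : 0 < 1 - δ := by linarith
    calc _ ≤ (2 * (Real.sqrt x / x ^ (δ / 2)) + primeT x / ((1 - δ) * Real.log x))
          * Real.log x / (2 * Real.sqrt x) := by gcongr
      _ = _ := by field_simp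

end helpers

/-- As `x → ∞`, `Σ_{p ≤ x, p prime} 1/√p ∼ 2√x / log x`; that is,
`(Σ_{p ≤ x} 1/√p) · (log x)/(2√x) → 1`. -/
theorem stmt_18 :
    Tendsto (fun x : ℝ =>
      (∑ p ∈ Finset.filter Nat.Prime (Finset.range (⌊x⌋₊ + 1)), 1 / Real.sqrt p) *
        Real.log x / (2 * Real.sqrt x))
      atTop (nhds 1) := by
  exact primeS_tendsto
end
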